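/- arXiv:0905.1099 — 2 statements merged into one kernel-verified Lean document; each statement's English description precedes it below -/
import Mathlib

section
/- If ⊢_AF2 T : ∀x{N^g[x] → ¬¬N[x]}, then for every n ∈ ℕ there is a λ-term τₙ ≃β n̲ such that for every classical integer θₙ of value n (i.e. every closed λC-term with ⊢_C2 θₙ : N[sⁿ0]), there is a substitution σ such that (T)θₙ f ≻_C (f)σ(τₙ), and consequently (T)θₙ λx x ≻_C σ′(τₙ) →β n̲. -/
/- Pure untyped λ-calculus with de Bruijn indices. -/

inductive Lam : Type
  | var : ℕ → Lam
  | app : Lam → Lam → Lam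
  | abs : Lam → Lam
  deriving DecidableEq

namespace Lam

/-- Renaming of free variables. -/
def rename (ρ : ℕ → ℕ) : Lam → Lam
  | var i => var (ρ i)
  | app u v => app (u.rename ρ) (v.rename ρ)
  | abs u => abs (u.rename (fun i => match i with | 0 => 0 | j+1 => ρ j + 1))

/-- Lifting of a simultaneous substitution under a binder. -/
def liftSub (σ : ℕ → Lam) : ℕ → Lam
  | 0 => var 0
  | i+1 => (σ i).rename (· + 1)

/-- Simultaneous (capture-avoiding) substitution of the free variables. -/
def subst (σ : ℕ → Lam) : Lam → Lam
  | var i => σ i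
  | app u v => app (u.subst σ) (v.subst σ)
  | abs u => abs (u.subst (liftSub σ))

/-- `u.subst0 v` is `u[v/x]` for the first variable. -/
def subst0 (u v : Lam) : Lam :=
  u.subst (fun i => match i with | 0 => v | j+1 => var j)

/-- One step of β-reduction (anywhere in the term). -/
inductive Beta : Lam → Lam → Prop
  | beta (u v : Lam) : Beta (app (abs u) v) (u.subst0 v)
  | appL {u u'} (v) : Beta u u' → Beta (app u v) (app u' v)
  | appR (u) {v v'} : Beta v v' → Beta (app u v) (app u v')
  | abs {u u'} : Beta u u' → Beta (abs u) (abs u')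

/-- β-equivalence `≃β`. -/
def BetaEq : Lam → Lam → Prop := Relation.EqvGen Beta

/-- A term is normal if it has no β-redex. -/
def Normal (t : Lam) : Prop := ∀ u, ¬ Beta t u

def IsAbs : Lam → Prop
  | abs _ => True
  | _ => False

/-- One step of head reduction: reduction of the head redex. -/
inductive HeadStep : Lam → Lam → Prop
  | beta (u v) : HeadStep (app (abs u) v) (u.subst0 v)
  | appL {u u'} (v) : ¬ u.IsAbs → HeadStep u u' → HeadStep (app u v) (app u' v)
  | abs {u u'} : HeadStep u u' → HeadStep (abs u) (abs u')

/-- `HeadRedN n u v` : `u` head-reduces to `v` in exactly `n` steps (`u ≻ v` with `n(u,v) = n`). -/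
inductive HeadRedN : ℕ → Lam → Lam → Prop
  | refl (u) : HeadRedN 0 u u
  | step {n u v w} : HeadStep u v → HeadRedN n v w → HeadRedN (n+1) u w

/-- `u ≻ v` : `v` is obtained from `u` by some head reductions. -/
def HeadRed (u v : Lam) : Prop := ∃ n, HeadRedN n u v

/-- Head normal form. -/
def HeadNF (t : Lam) : Prop := ∀ u, ¬ HeadStep t u

def ClosedUnder : ℕ → Lam → Prop
  | k, var i => i < k
  | k, app u v => ClosedUnder k u ∧ ClosedUnder k v
  | k, abs u => ClosedUnder (k+1) u

/-- Closed λ-term. -/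
def Closed (t : Lam) : Prop := ClosedUnder 0 t

/-- `(f)ⁿx` : `iterApp f n x = (f)(f)…(f)x`. -/
def iterApp (f : Lam) : ℕ → Lam → Lam
  | 0, x => x
  | n+1, x => app f (iterApp f n x)

/-- The Church integer `n̲ = λxλf(f)ⁿx`. -/
def church (n : ℕ) : Lam := abs (abs (iterApp (var 0) n (var 1)))

/-- `(t)w₁…wₖ`. -/
def appList (t : Lam) (ws : List Lam) : Lam := ws.foldl app t

/-- `T` is a storage operator for the closed normal term `t` :
there is `τ ≃β t` such that for every `θ ≃β t` there is a substitution `σ`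
(not touching the fresh variable `f`, represented by the de Bruijn index `0`)
with `(T)θf ≻ (f)σ(τ)`. -/
def IsStorageFor (T t : Lam) : Prop :=
  Closed T ∧ ∃ τ, BetaEq τ t ∧ ∀ θ, BetaEq θ t →
    ∃ σ : ℕ → Lam, σ 0 = var 0 ∧
      HeadRed (app (app T θ) (var 0)) (app (var 0) (τ.subst σ))

end Lam

/- Second order predicate logic : the types of the AF2 type system. -/

/-- A first order language: function symbols with arities, and predicate symbols. -/
structure Sig where
  Fn : Type
  arFn : Fn → ℕ
  Pr : Type

/-- First order terms over `S` (de Bruijn indices for first order variables). -/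
inductive FOTerm (S : Sig) : Type
  | var : ℕ → FOTerm S
  | fn : (f : S.Fn) → (Fin (S.arFn f) → FOTerm S) → FOTerm S

namespace FOTerm

variable {S : Sig}

def rename (ρ : ℕ → ℕ) : FOTerm S → FOTerm S
  | var i => var (ρ i)
  | fn f ts => fn f (fun i => (ts i).rename ρ)

def liftSub (σ : ℕ → FOTerm S) : ℕ → FOTerm S
  | 0 => var 0
  | i+1 => (σ i).rename (· + 1)

/-- Simultaneous substitution on first order terms. -/
def subst (σ : ℕ → FOTerm S) : FOTerm S → FOTerm S
  | var i => σ i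
  | fn f ts => fn f (fun i => (ts i).subst σ)

end FOTerm


/-- Formulas of second order predicate logic over `S` : `⊥`, atomic formulas
`P(t₁,…,tₙ)` (predicate symbol) and `X(t₁,…,tₙ)` (predicate variable, de Bruijn),
implication, first order and second order universal quantification. -/
inductive Form (S : Sig) : Type
  | bot : Form S
  | pr : S.Pr → List (FOTerm S) → Form S
  | pvar : ℕ → List (FOTerm S) → Form S
  | arr : Form S → Form S → Form S
  | fall : Form S → Form S
  | pall : Form S → Form S

namespace Form

variable {S : Sig}

/-- `¬A = A → ⊥`. -/
def neg (A : Form S) : Form S := arr A bot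

/-- Substitution of first order terms for the first order variables of a formula. -/
def substFO (σ : ℕ → FOTerm S) : Form S → Form S
  | bot => bot
  | pr P ts => pr P (ts.map (FOTerm.subst σ))
  | pvar X ts => pvar X (ts.map (FOTerm.subst σ))
  | arr A B => arr (A.substFO σ) (B.substFO σ)
  | fall A => fall (A.substFO (FOTerm.liftSub σ))
  | pall A => pall (A.substFO σ)

/-- `A[u/x]` for the first first-order variable. -/
def substFO0 (A : Form S) (u : FOTerm S) : Form S :=
  A.substFO (fun i => match i with | 0 => u | j+1 => FOTerm.var j)

/-- Lifting of the free first order variables (used for the rule (4)). -/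
def shiftFO (A : Form S) : Form S := A.substFO (fun i => FOTerm.var (i+1))

/-- Renaming of the free predicate variables. -/
def rename2 (ρ : ℕ → ℕ) : Form S → Form S
  | bot => bot
  | pr P ts => pr P ts
  | pvar X ts => pvar (ρ X) ts
  | arr A B => arr (A.rename2 ρ) (B.rename2 ρ)
  | fall A => fall (A.rename2 ρ)
  | pall A => pall (A.rename2 (fun i => match i with | 0 => 0 | j+1 => ρ j + 1))

/-- `inst2 G d e A` : substitution `A[G/X]` of the formula `G` (whose first order
variables `0,…,k-1` are the parameters of the predicate variable `X`) for the
predicate variable `X` of de Bruijn index `e`, where `d` first order binders have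
been crossed. Each atomic subformula `X(t₁,…,tₖ)` is replaced by `G[t₁/x₁,…,tₖ/xₖ]`. -/
def inst2 (G : Form S) : ℕ → ℕ → Form S → Form S
  | _, _, bot => bot
  | _, _, pr P ts => pr P ts
  | d, e, pvar X ts =>
      if X = e then
        (G.rename2 (· + e)).substFO (fun i =>
          if h : i < ts.length then ts.get ⟨i, h⟩ else FOTerm.var (i - ts.length + d))
      else pvar (if e < X then X - 1 else X) ts
  | d, e, arr A B => arr (inst2 G d e A) (inst2 G d e B)
  | d, e, fall A => fall (inst2 G (d+1) e A)
  | d, e, pall A => pall (inst2 G d (e+1) A)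

/-- `A[G/X]` for the first predicate variable. -/
def inst2_0 (A G : Form S) : Form S := inst2 G 0 0 A

end Form

/-- Axioms of the equational theory: substitution instances of the equations of `E`. -/
def EqAx {S : Sig} (E : Set (FOTerm S × FOTerm S)) (u v : FOTerm S) : Prop :=
  ∃ p ∈ E, ∃ σ : ℕ → FOTerm S, u = p.1.subst σ ∧ v = p.2.subst σ

/-- `u ≈ v` : the equivalence relation generated by the substitution instances
of the equations of `E`. -/
def EqE {S : Sig} (E : Set (FOTerm S × FOTerm S)) : FOTerm S → FOTerm S → Prop :=
  Relation.EqvGen (EqAx E)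

/-- The AF2 type system: `AF2 S E Γ t A` means `Γ ⊢_{AF2} t : A`
with respect to the set of equations `E` (de Bruijn presentation: the rules
(4) and (6) of ∀-introduction lift the context, which implements the side
condition that the quantified variable does not occur free in `Γ`). -/
inductive AF2 (S : Sig) (E : Set (FOTerm S × FOTerm S)) :
    List (Form S) → Lam → Form S → Prop
  | var {Γ : List (Form S)} {i : ℕ} {A : Form S} :
      Γ[i]? = some A → AF2 S E Γ (.var i) A
  | absI {Γ : List (Form S)} {A B : Form S} {t : Lam} :
      AF2 S E (A :: Γ) t B → AF2 S E Γ (.abs t) (.arr A B)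
  | appE {Γ : List (Form S)} {A B : Form S} {u v : Lam} :
      AF2 S E Γ u (.arr A B) → AF2 S E Γ v A → AF2 S E Γ (.app u v) B
  | fallI {Γ : List (Form S)} {t : Lam} {A : Form S} :
      AF2 S E (Γ.map Form.shiftFO) t A → AF2 S E Γ t (.fall A)
  | fallE {Γ : List (Form S)} {t : Lam} {A : Form S} (u : FOTerm S) :
      AF2 S E Γ t (.fall A) → AF2 S E Γ t (A.substFO0 u)
  | pallI {Γ : List (Form S)} {t : Lam} {A : Form S} :
      AF2 S E (Γ.map (Form.rename2 (· + 1))) t A → AF2 S E Γ t (.pall A)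
  | pallE {Γ : List (Form S)} {t : Lam} {A : Form S} (G : Form S) :
      AF2 S E Γ t (.pall A) → AF2 S E Γ t (A.inst2_0 G)
  | eqE {Γ : List (Form S)} {t : Lam} {A : Form S} {u v : FOTerm S} :
      AF2 S E Γ t (A.substFO0 u) → EqE E u v → AF2 S E Γ t (A.substFO0 v)

/- The language of arithmetic: a constant 0 and a unary function symbol s. -/

inductive NatFn : Type
  | zero : NatFn
  | succ : NatFn

/-- The signature with a constant symbol `0` and a unary function symbol `s`. -/
def NatSig : Sig where
  Fn := NatFn
  arFn := fun f => match f with | .zero => 0 | .succ => 1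
  Pr := Empty

/-- The first order term `0`. -/
def zeroT : FOTerm NatSig := .fn NatFn.zero (fun i => i.elim0)

/-- The first order term `s(u)`. -/
def succT (u : FOTerm NatSig) : FOTerm NatSig := .fn NatFn.succ (fun _ => u)

/-- The first order term `sⁿ(0)`. -/
def numT : ℕ → FOTerm NatSig
  | 0 => zeroT
  | n+1 => succT (numT n)

/-- A set of equations is adequate with the type of integers iff
`s(a) ≉ 0` and `s(a) ≈ s(b)` implies `a ≈ b`. -/
def Adequate (E : Set (FOTerm NatSig × FOTerm NatSig)) : Prop :=
  (∀ a, ¬ EqE E (succT a) zeroT) ∧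
  (∀ a b, EqE E (succT a) (succT b) → EqE E a b)

/-- The type of integers `N[u] = ∀X{X(0), ∀y(X(y) → X(sy)) → X(u)}`. -/
def NForm (u : FOTerm NatSig) : Form NatSig :=
  .pall (.arr (.pvar 0 [zeroT])
    (.arr (.fall (.arr (.pvar 0 [FOTerm.var 0]) (.pvar 0 [succT (FOTerm.var 0)])))
      (.pvar 0 [u])))

/-- The Gödel translation `F^g`, obtained by putting `¬` in front of
each atomic subformula of `F`. -/
def Form.godel {S : Sig} : Form S → Form S
  | .bot => .neg .bot
  | .pr P ts => .neg (.pr P ts)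
  | .pvar X ts => .neg (.pvar X ts)
  | .arr A B => .arr A.godel B.godel
  | .fall A => .fall A.godel
  | .pall A => .pall A.godel

/-- The type `∀x{N^g[x] → ¬¬N[x]}` of storage operators. -/
def storType : Form NatSig :=
  .fall (.arr (NForm (FOTerm.var 0)).godel (.neg (.neg (NForm (FOTerm.var 0)))))

/- The λC-calculus : λ-calculus with an extra constant C. -/

inductive LC : Type
  | var : ℕ → LC
  | app : LC → LC → LC
  | abs : LC → LC
  | cc : LC

namespace LC

def rename (ρ : ℕ → ℕ) : LC → LC
  | var i => var (ρ i)
  | app u v => app (u.rename ρ) (v.rename ρ)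
  | abs u => abs (u.rename (fun i => match i with | 0 => 0 | j+1 => ρ j + 1))
  | cc => cc

def liftSub (σ : ℕ → LC) : ℕ → LC
  | 0 => var 0
  | i+1 => (σ i).rename (· + 1)

def subst (σ : ℕ → LC) : LC → LC
  | var i => σ i
  | app u v => app (u.subst σ) (v.subst σ)
  | abs u => abs (u.subst (liftSub σ))
  | cc => cc

def subst0 (u v : LC) : LC :=
  u.subst (fun i => match i with | 0 => v | j+1 => var j)

/-- One step of β-reduction on λC-terms. -/
inductive Beta : LC → LC → Prop
  | beta (u v : LC) : Beta (app (abs u) v) (u.subst0 v)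
  | appL {u u'} (v) : Beta u u' → Beta (app u v) (app u' v)
  | appR (u) {v v'} : Beta v v' → Beta (app u v) (app u v')
  | abs {u u'} : Beta u u' → Beta (abs u) (abs u')

/-- β-equivalence on λC-terms. -/
def BetaEq : LC → LC → Prop := Relation.EqvGen Beta

def ClosedUnder : ℕ → LC → Prop
  | k, var i => i < k
  | k, app u v => ClosedUnder k u ∧ ClosedUnder k v
  | k, abs u => ClosedUnder (k+1) u
  | _, cc => True

def Closed (t : LC) : Prop := ClosedUnder 0 t

/-- Pure λ-terms : the constant `C` does not occur. -/
def Pure : LC → Prop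
  | var _ => True
  | app u v => Pure u ∧ Pure v
  | abs u => Pure u
  | cc => False

def iterApp (f : LC) : ℕ → LC → LC
  | 0, x => x
  | n+1, x => app f (iterApp f n x)

/-- The Church integer `n̲ = λxλf(f)ⁿx` as a λC-term. -/
def church (n : ℕ) : LC := abs (abs (iterApp (var 0) n (var 1)))

/-- `(t)t₁…tₙ`. -/
def appSpine (t : LC) (ts : List LC) : LC := ts.foldl app t

/-- One step of head C-reduction :
`(λx u)t t₁…tₙ → (u[t/x])t₁…tₙ` and `(C)t t₁…tₙ → (t)λx(x)t₁…tₙ`. -/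
inductive HCStep : LC → LC → Prop
  | beta (u t : LC) (ts : List LC) :
      HCStep (appSpine (app (abs u) t) ts) (appSpine (u.subst0 t) ts)
  | cred (t : LC) (ts : List LC) :
      HCStep (appSpine (app cc t) ts)
        (app t (abs (appSpine (var 0) (ts.map (rename (· + 1))))))

/-- `u ≻_C v`. -/
def HCRed : LC → LC → Prop := Relation.ReflTransGen HCStep

end LC

/-- The type systems AF2 (`cl = false`) and C2 (`cl = true`) over λC-terms :
C2 is obtained from AF2 by adding the axiom `C : ∀X{¬¬X → X}`. -/
inductive TypC (S : Sig) (E : Set (FOTerm S × FOTerm S)) (cl : Bool) :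
    List (Form S) → LC → Form S → Prop
  | ccAx {Γ : List (Form S)} : cl = true →
      TypC S E cl Γ .cc
        (.pall (.arr (.arr (.arr (.pvar 0 []) .bot) .bot) (.pvar 0 [])))
  | var {Γ : List (Form S)} {i : ℕ} {A : Form S} :
      Γ[i]? = some A → TypC S E cl Γ (.var i) A
  | absI {Γ : List (Form S)} {A B : Form S} {t : LC} :
      TypC S E cl (A :: Γ) t B → TypC S E cl Γ (.abs t) (.arr A B)
  | appE {Γ : List (Form S)} {A B : Form S} {u v : LC} :
      TypC S E cl Γ u (.arr A B) → TypC S E cl Γ v A → TypC S E cl Γ (.app u v) B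
  | fallI {Γ : List (Form S)} {t : LC} {A : Form S} :
      TypC S E cl (Γ.map Form.shiftFO) t A → TypC S E cl Γ t (.fall A)
  | fallE {Γ : List (Form S)} {t : LC} {A : Form S} (u : FOTerm S) :
      TypC S E cl Γ t (.fall A) → TypC S E cl Γ t (A.substFO0 u)
  | pallI {Γ : List (Form S)} {t : LC} {A : Form S} :
      TypC S E cl (Γ.map (Form.rename2 (· + 1))) t A → TypC S E cl Γ t (.pall A)
  | pallE {Γ : List (Form S)} {t : LC} {A : Form S} (G : Form S) :
      TypC S E cl Γ t (.pall A) → TypC S E cl Γ t (A.inst2_0 G)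
  | eqE {Γ : List (Form S)} {t : LC} {A : Form S} {u v : FOTerm S} :
      TypC S E cl Γ t (A.substFO0 u) → EqE E u v → TypC S E cl Γ t (A.substFO0 v)

/- ### Substitution lemmas for λC-terms -/

namespace LC

/-- Lifting of a renaming under a binder. -/
def upR (ρ : ℕ → ℕ) : ℕ → ℕ
  | 0 => 0
  | j+1 => ρ j + 1

/-- Extension of a substitution by a first value. -/
def scons (v : LC) (σ : ℕ → LC) : ℕ → LC
  | 0 => v
  | j+1 => σ j

theorem rename_abs (ρ : ℕ → ℕ) (u : LC) : (abs u).rename ρ = abs (u.rename (upR ρ)) := by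
  rfl

theorem subst0_eq (u v : LC) : u.subst0 v = u.subst (scons v var) := by
  rfl

theorem rename_subst (t : LC) : ∀ (ρ : ℕ → ℕ) (σ : ℕ → LC),
    (t.rename ρ).subst σ = t.subst (fun i => σ (ρ i)) := by
  induction t with
  | var i => intros; rfl
  | app u v ihu ihv => intros; simp [rename, subst, ihu, ihv]
  | abs u ih =>
    intro ρ σ
    rw [rename_abs]
    simp only [subst, ih]
    congr 2
    funext i
    cases i <;> rfl
  | cc => intros; rfl

theorem rename_rename (t : LC) : ∀ (ρ ρ' : ℕ → ℕ),
    (t.rename ρ).rename ρ' = t.rename (fun i => ρ' (ρ i)) := by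
  induction t with
  | var i => intros; rfl
  | app u v ihu ihv => intros; simp [rename, ihu, ihv]
  | abs u ih =>
    intro ρ σ
    rw [rename_abs, rename_abs, rename_abs, ih]
    congr 2
    funext i
    cases i <;> rfl
  | cc => intros; rfl

theorem subst_rename (t : LC) : ∀ (σ : ℕ → LC) (ρ : ℕ → ℕ),
    (t.subst σ).rename ρ = t.subst (fun i => (σ i).rename ρ) := by
  induction t with
  | var i => intros; rfl
  | app u v ihu ihv => intros; simp [rename, subst, ihu, ihv]
  | abs u ih =>
    intro ρ σ
    simp only [subst]
    rw [rename_abs]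
    simp only [ih]
    congr 2
    funext i
    cases i with
    | zero => rfl
    | succ j => simp only [liftSub, rename_rename]; rfl
  | cc => intros; rfl

theorem subst_subst (t : LC) : ∀ (σ σ' : ℕ → LC),
    (t.subst σ).subst σ' = t.subst (fun i => (σ i).subst σ') := by
  induction t with
  | var i => intros; rfl
  | app u v ihu ihv => intros; simp [subst, ihu, ihv]
  | abs u ih =>
    intro ρ σ
    simp only [subst, ih]
    congr 2
    funext i
    cases i with
    | zero => rfl
    | succ j => simp only [liftSub, rename_subst, subst_rename]
  | cc => intros; rfl

theorem subst_congr (t : LC) : ∀ (k : ℕ) (σ σ' : ℕ → LC), ClosedUnder k t →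
    (∀ i < k, σ i = σ' i) → t.subst σ = t.subst σ' := by
  induction t with
  | var i => intro k σ σ' h hs; exact hs i h
  | app u v ihu ihv =>
    intro k σ σ' h hs
    simp only [subst]
    rw [ihu k σ σ' h.1 hs, ihv k σ σ' h.2 hs]
  | abs u ih =>
    intro k σ σ' h hs
    simp only [subst]
    rw [ih (k+1) (liftSub σ) (liftSub σ') h]
    intro i hi
    cases i with
    | zero => rfl
    | succ j => simp only [liftSub, hs j (by omega)]
  | cc => intros; rfl

theorem subst_var (t : LC) : t.subst var = t := by
  induction t with
  | var i => rfl
  | app u v ihu ihv => simp [subst, ihu, ihv]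
  | abs u ih =>
    simp only [subst]
    have : liftSub var = var := by
      funext i
      cases i <;> rfl
    rw [this, ih]
  | cc => rfl

theorem subst_closed {t : LC} (h : Closed t) (σ : ℕ → LC) : t.subst σ = t := by
  rw [subst_congr t 0 σ var h (by intro i hi; omega), subst_var]

theorem rename_eq_subst (t : LC) (ρ : ℕ → ℕ) : t.rename ρ = t.subst (fun i => var (ρ i)) := by
  have h := subst_rename t var ρ
  rw [subst_var] at h
  exact h

theorem lift_subst0 (u v : LC) (σ : ℕ → LC) :
    (u.subst (liftSub σ)).subst0 v = u.subst (scons v σ) := by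
  rw [subst0_eq, subst_subst]
  congr 1
  funext i
  cases i with
  | zero => rfl
  | succ j => simp only [liftSub, rename_subst, scons]; exact subst_var _

theorem subst0_subst (u v : LC) (σ : ℕ → LC) :
    (u.subst0 v).subst σ = (u.subst (liftSub σ)).subst0 (v.subst σ) := by
  rw [lift_subst0, subst0_eq, subst_subst]
  congr 1
  funext i
  cases i <;> rfl

theorem appSpine_subst (ts : List LC) : ∀ (t : LC) (σ : ℕ → LC),
    (appSpine t ts).subst σ = appSpine (t.subst σ) (ts.map (subst σ)) := by
  induction ts with
  | nil => intros; rfl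
  | cons a ts ih =>
    intro t σ
    show (appSpine (app t a) ts).subst σ = _
    rw [ih]
    rfl

theorem HCStep.subst {u v : LC} (h : HCStep u v) (σ : ℕ → LC) :
    HCStep (u.subst σ) (v.subst σ) := by
  cases h with
  | beta u t ts =>
    rw [appSpine_subst, appSpine_subst, subst0_subst]
    exact HCStep.beta _ _ _
  | cred t ts =>
    rw [appSpine_subst]
    have : (app t (abs (appSpine (var 0) (ts.map (rename (· + 1)))))).subst σ =
        app (t.subst σ) (abs (appSpine (var 0) ((ts.map (LC.subst σ)).map (rename (· + 1))))) := by
      simp only [LC.subst, appSpine_subst, List.map_map]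
      congr 3
      apply List.map_congr_left
      intro a _
      simp only [Function.comp, rename_subst, subst_rename, liftSub]
    rw [this]
    exact HCStep.cred _ _

theorem HCRed.subst {u v : LC} (h : HCRed u v) (σ : ℕ → LC) :
    HCRed (u.subst σ) (v.subst σ) := by
  induction h with
  | refl => exact Relation.ReflTransGen.refl
  | tail _ h ih => exact ih.tail (h.subst σ)

theorem Beta.subst {u v : LC} (h : Beta u v) : ∀ (σ : ℕ → LC),
    Beta (u.subst σ) (v.subst σ) := by
  induction h with
  | beta u v => intro σ; rw [subst0_subst]; exact Beta.beta _ _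
  | appL v _ ih => intro σ; exact Beta.appL _ (ih σ)
  | appR u _ ih => intro σ; exact Beta.appR _ (ih σ)
  | abs _ ih => intro σ; exact Beta.abs (ih _)

theorem BetaS.subst {u v : LC} (h : Relation.ReflTransGen Beta u v) (σ : ℕ → LC) :
    Relation.ReflTransGen Beta (u.subst σ) (v.subst σ) := by
  induction h with
  | refl => exact Relation.ReflTransGen.refl
  | tail _ h ih => exact ih.tail (h.subst σ)

theorem BetaS.rename {u v : LC} (h : Relation.ReflTransGen Beta u v) (ρ : ℕ → ℕ) :
    Relation.ReflTransGen Beta (u.rename ρ) (v.rename ρ) := by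
  rw [rename_eq_subst, rename_eq_subst]
  exact BetaS.subst h _

theorem BetaS.abs {u v : LC} (h : Relation.ReflTransGen Beta u v) :
    Relation.ReflTransGen Beta (abs u) (abs v) := by
  induction h with
  | refl => exact Relation.ReflTransGen.refl
  | tail _ h ih => exact ih.tail (Beta.abs h)

theorem closed_rename (t : LC) : ∀ (k k' : ℕ) (ρ : ℕ → ℕ), ClosedUnder k t →
    (∀ i < k, ρ i < k') → ClosedUnder k' (t.rename ρ) := by
  induction t with
  | var i => intro k k' ρ h hs; exact hs i h
  | app u v ihu ihv =>
    intro k k' ρ h hs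
    exact ⟨ihu k k' ρ h.1 hs, ihv k k' ρ h.2 hs⟩
  | abs u ih =>
    intro k k' ρ h hs
    rw [rename_abs]
    refine ih (k+1) (k'+1) _ h ?_
    intro i hi
    cases i with
    | zero => simp [upR]
    | succ j => simp only [upR]; have := hs j (by omega); omega
  | cc => intros; trivial

theorem closed_subst (t : LC) : ∀ (k k' : ℕ) (σ : ℕ → LC), ClosedUnder k t →
    (∀ i < k, ClosedUnder k' (σ i)) → ClosedUnder k' (t.subst σ) := by
  induction t with
  | var i => intro k k' ρ h hs; exact hs i h
  | app u v ihu ihv =>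
    intro k k' ρ h hs
    exact ⟨ihu k k' ρ h.1 hs, ihv k k' ρ h.2 hs⟩
  | abs u ih =>
    intro k k' ρ h hs
    refine ih (k+1) (k'+1) _ h ?_
    intro i hi
    cases i with
    | zero => simp [liftSub, ClosedUnder]
    | succ j =>
      simp only [liftSub]
      exact closed_rename _ k' (k'+1) _ (hs j (by omega)) (by intro i hi; omega)
  | cc => intros; trivial

theorem closed_subst0 {u v : LC} {k : ℕ} (hu : ClosedUnder (k+1) u) (hv : ClosedUnder k v) :
    ClosedUnder k (u.subst0 v) := by
  rw [subst0_eq]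
  refine closed_subst u (k+1) k _ hu ?_
  intro i hi
  cases i with
  | zero => exact hv
  | succ j => show j < k; omega

theorem closed_mono (t : LC) : ∀ (k k' : ℕ), k ≤ k' → ClosedUnder k t → ClosedUnder k' t := by
  induction t with
  | var i => intro k k' h hs; exact lt_of_lt_of_le hs h
  | app u v ihu ihv =>
    intro k k' h hs
    exact ⟨ihu k k' h hs.1, ihv k k' h hs.2⟩
  | abs u ih =>
    intro k k' h hs
    exact ih (k+1) (k'+1) (by omega) hs
  | cc => intros; trivial

theorem pure_rename (t : LC) : ∀ (ρ : ℕ → ℕ), Pure t → Pure (t.rename ρ) := by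
  induction t with
  | var i => intros; trivial
  | app u v ihu ihv => intro ρ h; exact ⟨ihu ρ h.1, ihv ρ h.2⟩
  | abs u ih => intro ρ h; rw [rename_abs]; exact ih _ h
  | cc => intro ρ h; exact h

theorem pure_subst (t : LC) : ∀ (σ : ℕ → LC), Pure t → (∀ i, Pure (σ i)) →
    Pure (t.subst σ) := by
  induction t with
  | var i => intro σ _ h; exact h i
  | app u v ihu ihv => intro ρ h hs; exact ⟨ihu ρ h.1 hs, ihv ρ h.2 hs⟩
  | abs u ih =>
    intro ρ h hs
    refine ih _ h ?_
    intro i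
    cases i with
    | zero => trivial
    | succ j => exact pure_rename _ _ (hs j)
  | cc => intro ρ h; exact h.elim

theorem pure_subst0 {u v : LC} (hu : Pure u) (hv : Pure v) : Pure (u.subst0 v) := by
  rw [subst0_eq]
  refine pure_subst u _ hu ?_
  intro i
  cases i with
  | zero => exact hv
  | succ j => trivial

theorem closed_appSpine (ts : List LC) : ∀ (t : LC) (k : ℕ),
    ClosedUnder k (appSpine t ts) ↔ ClosedUnder k t ∧ ∀ a ∈ ts, ClosedUnder k a := by
  induction ts with
  | nil => intro t k; simp [appSpine]
  | cons a ts ih =>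
    intro t k
    show ClosedUnder k (appSpine (app t a) ts) ↔ _
    rw [ih]
    simp [ClosedUnder, and_assoc]

theorem pure_appSpine (ts : List LC) : ∀ (t : LC),
    Pure (appSpine t ts) ↔ Pure t ∧ ∀ a ∈ ts, Pure a := by
  induction ts with
  | nil => intro t; simp [appSpine]
  | cons a ts ih =>
    intro t
    show Pure (appSpine (app t a) ts) ↔ _
    rw [ih]
    simp [Pure, and_assoc]

theorem closed_beta {u t : LC} {ts : List LC} {k : ℕ}
    (h : ClosedUnder k (appSpine (app (abs u) t) ts)) :
    ClosedUnder k (appSpine (u.subst0 t) ts) := by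
  rw [closed_appSpine] at h ⊢
  exact ⟨closed_subst0 h.1.1 h.1.2, h.2⟩

theorem pure_beta {u t : LC} {ts : List LC}
    (h : Pure (appSpine (app (abs u) t) ts)) :
    Pure (appSpine (u.subst0 t) ts) := by
  rw [pure_appSpine] at h ⊢
  exact ⟨pure_subst0 h.1.1 h.1.2, h.2⟩

theorem closed_Beta {u v : LC} (h : Beta u v) : ∀ k, ClosedUnder k u → ClosedUnder k v := by
  induction h with
  | beta u v => intro k h; exact closed_subst0 h.1 h.2
  | appL v _ ih => intro k h; exact ⟨ih k h.1, h.2⟩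
  | appR u _ ih => intro k h; exact ⟨h.1, ih k h.2⟩
  | abs _ ih => intro k h; exact ih (k+1) h

/- ### Spines and determinism -/

/-- Head and arguments of a term. -/
def spine : LC → LC × List LC
  | app u v => ((spine u).1, (spine u).2 ++ [v])
  | var i => (var i, [])
  | abs u => (abs u, [])
  | cc => (cc, [])

theorem spine_appSpine (ts : List LC) : ∀ t : LC,
    spine (appSpine t ts) = ((spine t).1, (spine t).2 ++ ts) := by
  induction ts with
  | nil => intro t; simp [appSpine]
  | cons a ts ih =>
    intro t
    show spine (appSpine (app t a) ts) = _
    rw [ih]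
    simp [spine]

theorem HCStep.det {u v w : LC} (h : HCStep u v) (h' : HCStep u w) : v = w := by
  cases h with
  | beta a t ts =>
    generalize hx : appSpine (app (LC.abs a) t) ts = x at h'
    cases h' with
    | beta a' t' ts' =>
      have := congrArg spine hx
      rw [spine_appSpine, spine_appSpine] at this
      simp [spine] at this
      obtain ⟨rfl, rfl, rfl⟩ := this
      rfl
    | cred t' ts' =>
      have := congrArg spine hx
      rw [spine_appSpine, spine_appSpine] at this
      simp [spine] at this
  | cred t ts =>
    generalize hx : appSpine (app cc t) ts = x at h'
    cases h' with
    | beta a' t' ts' =>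
      have := congrArg spine hx
      rw [spine_appSpine, spine_appSpine] at this
      simp [spine] at this
    | cred t' ts' =>
      have := congrArg spine hx
      rw [spine_appSpine, spine_appSpine] at this
      simp [spine] at this
      obtain ⟨rfl, rfl⟩ := this
      rfl

theorem HCStep.not_var {k : ℕ} {ts : List LC} {v : LC} :
    ¬ HCStep (appSpine (LC.var k) ts) v := by
  intro h
  generalize hx : appSpine (LC.var k) ts = x at h
  cases h with
  | beta a' t' ts' =>
    have := congrArg spine hx
    rw [spine_appSpine, spine_appSpine] at this
    simp [spine] at this
  | cred t' ts' =>
    have := congrArg spine hx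
    rw [spine_appSpine, spine_appSpine] at this
    simp [spine] at this

/- ### Extraction of a Church integer -/

/-- The renaming that abstracts the free variable `k`. -/
def absR (k : ℕ) : ℕ → ℕ := fun i => if i = k then 0 else i + 1

theorem app_var_red {k : ℕ} {t s : LC} (hk : ClosedUnder k t)
    (h : Relation.ReflTransGen Beta (app t (var k)) s) :
    (∃ t', Relation.ReflTransGen Beta t t' ∧ ClosedUnder k t' ∧ s = app t' (var k)) ∨
      Relation.ReflTransGen Beta t (LC.abs (s.rename (absR k))) := by
  induction h with
  | refl => exact Or.inl ⟨t, Relation.ReflTransGen.refl, hk, rfl⟩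
  | @tail s s' _ hs ih =>
    rcases ih with ⟨t', h1, h2, rfl⟩ | h1
    · cases hs with
      | beta u v =>
        right
        have : (u.subst0 (var k)).rename (absR k) = u := by
          rw [subst0_eq, subst_rename, subst_congr u (k+1) _ var h2, subst_var]
          intro i hi
          cases i with
          | zero => simp [scons, rename, absR]
          | succ j =>
            have : j ≠ k := by omega
            simp [scons, rename, absR, this]
        rw [this]
        exact h1
      | appL v hb => exact Or.inl ⟨_, h1.tail hb, closed_Beta hb _ h2, rfl⟩
      | appR u hb => cases hb
    · right
      exact h1.trans (BetaS.abs (BetaS.rename (Relation.ReflTransGen.single hs) _))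

theorem rename_iterApp (ρ : ℕ → ℕ) (f x : LC) (n : ℕ) :
    (iterApp f n x).rename ρ = iterApp (f.rename ρ) n (x.rename ρ) := by
  induction n with
  | zero => rfl
  | succ n ih => simp [iterApp, rename, ih]

theorem church_extract {k n : ℕ} {t : LC} (hk : ClosedUnder k t)
    (h : Relation.ReflTransGen Beta (app (app t (var k)) (var (k+1)))
      (iterApp (var (k+1)) n (var k))) :
    Relation.ReflTransGen Beta t (church n) := by
  have hk1 : ClosedUnder (k+1) (app t (var k)) :=
    ⟨closed_mono t k (k+1) (by omega) hk, Nat.lt_succ_self k⟩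
  rcases app_var_red hk1 h with ⟨t', _, _, h3⟩ | h1
  · exfalso
    cases n with
    | zero => simp [iterApp] at h3
    | succ n =>
      simp only [iterApp, LC.app.injEq] at h3
      cases n with
      | zero => simp [iterApp] at h3
      | succ n => simp [iterApp] at h3
  · rcases app_var_red hk h1 with ⟨t', _, _, h3⟩ | h2
    · simp at h3
    · rw [rename_abs, rename_iterApp, rename_iterApp] at h2
      simpa [rename, absR, upR, church] using h2

theorem church_closed (n : ℕ) : Closed (church n) := by
  show ClosedUnder 2 (iterApp (var 0) n (var 1))
  induction n with
  | zero => simp [iterApp, ClosedUnder]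
  | succ n ih => exact ⟨by simp [ClosedUnder], ih⟩

end LC

/- ### First order semantics -/

/-- Interpretation of the function symbols in `ℕ`. -/
def evalFn : (f : NatFn) → (Fin (NatSig.arFn f) → ℕ) → ℕ
  | .zero, _ => 0
  | .succ, v => v ⟨0, Nat.one_pos⟩ + 1

/-- Value of a first order term. -/
def evalT (e : ℕ → ℕ) : FOTerm NatSig → ℕ
  | .var i => e i
  | .fn f ts => evalFn f (fun i => evalT e (ts i))

/-- Extension of an environment by a first value. -/
def econs {α : Type} (d : α) (e : ℕ → α) : ℕ → α
  | 0 => d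
  | j+1 => e j

theorem evalT_subst (e : ℕ → ℕ) (σ : ℕ → FOTerm NatSig) (t : FOTerm NatSig) :
    evalT e (t.subst σ) = evalT (fun i => evalT e (σ i)) t := by
  induction t with
  | var i => rfl
  | fn f ts ih => simp only [FOTerm.subst, evalT, ih]

theorem evalT_rename (e : ℕ → ℕ) (ρ : ℕ → ℕ) (t : FOTerm NatSig) :
    evalT e (t.rename ρ) = evalT (fun i => e (ρ i)) t := by
  induction t with
  | var i => rfl
  | fn f ts ih => simp only [FOTerm.rename, evalT, ih]

theorem evalT_num (e : ℕ → ℕ) (n : ℕ) : evalT e (numT n) = n := by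
  induction n with
  | zero => rfl
  | succ n ih =>
    show evalT e (numT n) + 1 = _
    rw [ih]

theorem numT_eval (e : ℕ → ℕ) (t : FOTerm NatSig) :
    t.subst (fun i => numT (e i)) = numT (evalT e t) := by
  induction t with
  | var i => rfl
  | fn f ts ih =>
    cases f with
    | zero =>
      show (FOTerm.fn (S := NatSig) NatFn.zero _) = (FOTerm.fn (S := NatSig) NatFn.zero _)
      congr 1
      funext i
      exact i.elim0
    | succ =>
      show (FOTerm.fn (S := NatSig) NatFn.succ _) = (FOTerm.fn (S := NatSig) NatFn.succ _)
      congr 1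
      funext i
      have : i = ⟨0, Nat.one_pos⟩ := Subsingleton.elim (α := Fin 1) _ _
      rw [this]
      exact ih _

theorem FOTerm.subst_subst' {S : Sig} (t : FOTerm S) (σ σ' : ℕ → FOTerm S) :
    (t.subst σ).subst σ' = t.subst (fun i => (σ i).subst σ') := by
  induction t with
  | var i => rfl
  | fn f ts ih => simp only [FOTerm.subst, ih]

theorem EqE_subst {S : Sig} {E : Set (FOTerm S × FOTerm S)} {u v : FOTerm S} (h : EqE E u v)
    (ρ : ℕ → FOTerm S) : EqE E (u.subst ρ) (v.subst ρ) := by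
  induction h with
  | rel x y h =>
    obtain ⟨p, hp, σ, rfl, rfl⟩ := h
    refine Relation.EqvGen.rel _ _ ⟨p, hp, fun i => (σ i).subst ρ, ?_, ?_⟩ <;>
      rw [FOTerm.subst_subst']
  | refl x => exact Relation.EqvGen.refl _
  | symm x y _ ih => exact Relation.EqvGen.symm _ _ ih
  | trans x y z _ _ ih1 ih2 => exact Relation.EqvGen.trans _ _ _ ih1 ih2

theorem num_inj {E : Set (FOTerm NatSig × FOTerm NatSig)} (hE : Adequate E) :
    ∀ m k : ℕ, EqE E (numT m) (numT k) → m = k := by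
  intro m
  induction m with
  | zero =>
    intro k h
    cases k with
    | zero => rfl
    | succ k => exact (hE.1 _ (Relation.EqvGen.symm _ _ h)).elim
  | succ m ih =>
    intro k h
    cases k with
    | zero => exact (hE.1 _ h).elim
    | succ k => rw [ih k (hE.2 _ _ h)]

theorem EqE_eval {E : Set (FOTerm NatSig × FOTerm NatSig)} (hE : Adequate E)
    {u v : FOTerm NatSig} (h : EqE E u v) (e : ℕ → ℕ) : evalT e u = evalT e v := by
  have := EqE_subst h (fun i => numT (e i))
  rw [numT_eval, numT_eval] at this
  exact num_inj hE _ _ this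

/- ### Kripke realizability -/

/-- Kripke arrow on sets of terms indexed by worlds. -/
def karr {W : Type} (le : W → W → Prop) (A B : W → LC → Prop) : W → LC → Prop :=
  fun w t => ∀ w', le w w' → ∀ u, A w' u → B w' (.app t u)

/-- A realizability model. -/
structure RModel (W : Type) where
  le : W → W → Prop
  refl : ∀ w, le w w
  trans : ∀ {a b c}, le a b → le b c → le a c
  TV : (W → LC → Prop) → Prop
  mono : ∀ {A}, TV A → ∀ {w w' t}, le w w' → A w t → A w' t
  sat : ∀ {A}, TV A → ∀ {w u t ts}, A w (LC.appSpine (u.subst0 t) ts) →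
    A w (LC.appSpine (.app (.abs u) t) ts)
  bot : W → LC → Prop
  bot_TV : TV bot
  arr_TV : ∀ {A B}, TV A → TV B → TV (karr le A B)
  inter_TV : ∀ {ι : Type} (F : ι → W → LC → Prop), (∀ i, TV (F i)) →
    TV (fun w t => ∀ i, F i w t)

namespace RModel

variable {W : Type} (R : RModel W)

/-- Interpretation of formulas. -/
def interp : Form NatSig → (ℕ → ℕ) → (ℕ → List ℕ → W → LC → Prop) → W → LC → Prop
  | .bot, _, _ => R.bot
  | .pr P _, _, _ => Empty.elim P
  | .pvar X ts, e, η => η X (ts.map (evalT e))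
  | .arr A B, e, η => karr R.le (interp A e η) (interp B e η)
  | .fall A, e, η => fun w t => ∀ d : ℕ, interp A (econs d e) η w t
  | .pall A, e, η => fun w t => ∀ Φ : {Φ : List ℕ → W → LC → Prop // ∀ l, R.TV (Φ l)},
      interp A e (econs Φ.1 η) w t

theorem interp_TV (A : Form NatSig) : ∀ e η, (∀ X l, R.TV (η X l)) → R.TV (R.interp A e η) := by
  induction A with
  | bot => intros; exact R.bot_TV
  | pr P ts => exact Empty.elim P
  | pvar X ts => intro e η h; exact h X _
  | arr A B ihA ihB => intro e η h; exact R.arr_TV (ihA e η h) (ihB e η h)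
  | fall A ih => intro e η h; exact R.inter_TV _ (fun d => ih _ η h)
  | pall A ih =>
    intro e η h
    refine R.inter_TV _ (fun Φ => ih e _ ?_)
    intro X l
    cases X with
    | zero => exact Φ.2 l
    | succ X => exact h X l

theorem interp_substFO (A : Form NatSig) : ∀ σ e η,
    R.interp (A.substFO σ) e η = R.interp A (fun i => evalT e (σ i)) η := by
  induction A with
  | bot => intros; rfl
  | pr P ts => exact Empty.elim P
  | pvar X ts =>
    intro σ e η
    simp only [Form.substFO, interp, List.map_map]
    congr 1
    apply List.map_congr_left
    intro a _
    exact evalT_subst _ _ _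
  | arr A B ihA ihB => intro σ e η; simp only [Form.substFO, interp, ihA, ihB]
  | fall A ih =>
    intro σ e η
    simp only [Form.substFO, interp, ih]
    have : ∀ d : ℕ, (fun i => evalT (econs d e) (FOTerm.liftSub σ i)) =
        econs d (fun i => evalT e (σ i)) := by
      intro d
      funext i
      cases i with
      | zero => rfl
      | succ j => simp only [FOTerm.liftSub, evalT_rename]; rfl
    simp only [this]
  | pall A ih => intro σ e η; simp only [Form.substFO, interp, ih]

theorem interp_rename2 (A : Form NatSig) : ∀ ρ e η,
    R.interp (A.rename2 ρ) e η = R.interp A e (fun i => η (ρ i)) := by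
  induction A with
  | bot => intros; rfl
  | pr P ts => exact Empty.elim P
  | pvar X ts => intros; rfl
  | arr A B ihA ihB => intro σ e η; simp only [Form.rename2, interp, ihA, ihB]
  | fall A ih => intro σ e η; simp only [Form.rename2, interp, ih]
  | pall A ih =>
    intro σ e η
    simp only [Form.rename2, interp, ih]
    funext w t
    apply propext
    apply forall_congr'
    intro Φ
    have : (fun i => (econs Φ.1 η) (match i with | 0 => 0 | j+1 => σ j + 1)) =
        econs Φ.1 (fun i => η (σ i)) := by
      funext i
      cases i <;> rfl
    rw [← this]

/-- Environment for the parameters of a comprehension formula. -/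
def lenv (l : List ℕ) (e : ℕ → ℕ) : ℕ → ℕ :=
  fun i => if h : i < l.length then l[i] else e (i - l.length)

/-- Insertion of a predicate at position `k`. -/
def ins {α : Type} (k : ℕ) (Φ : α) (η : ℕ → α) : ℕ → α :=
  fun X => if X = k then Φ else if k < X then η (X - 1) else η X

theorem interp_inst2 (G A : Form NatSig) : ∀ d k e η,
    R.interp (Form.inst2 G d k A) e η =
      R.interp A e (ins k (fun l => R.interp G (lenv l (fun j => e (j + d)))
        (fun i => η (i + k))) η) := by
  induction A with
  | bot => intros; rfl
  | pr P ts => exact Empty.elim P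
  | pvar X ts =>
    intro d k e η
    by_cases hX : X = k
    · subst hX
      simp only [Form.inst2, if_true, interp_substFO, interp_rename2, interp, ins]
      congr 1
      funext i
      unfold lenv
      by_cases h : i < ts.length
      · simp [h]
      · simp [h, evalT]
    · simp only [Form.inst2, hX, if_false, interp, ins]
      split_ifs <;> rfl
  | arr A B ihA ihB => intro d k e η; simp only [Form.inst2, interp, ihA, ihB]
  | fall A ih => intro d k e η; simp only [Form.inst2, interp, ih]; rfl
  | pall A ih =>
    intro d k e η
    simp only [Form.inst2, interp, ih]
    funext w t
    apply propext
    apply forall_congr'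
    intro Φ
    have : ∀ Ψ : List ℕ → W → LC → Prop, ins (k+1) Ψ (econs Φ.1 η) = econs Φ.1 (ins k Ψ η) := by
      intro Ψ
      funext i
      cases i with
      | zero => simp [ins, econs]
      | succ j =>
        simp only [ins, econs, Nat.add_right_cancel_iff, Nat.add_lt_add_iff_right]
        split_ifs with h1 h2
        · rfl
        · obtain ⟨j', rfl⟩ : ∃ j', j = j' + 1 := ⟨j - 1, by omega⟩
          rfl
        · rfl
    rw [this]
    rfl

theorem adequacy {E : Set (FOTerm NatSig × FOTerm NatSig)} (hE : Adequate E) {cl : Bool}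
    (hcc : cl = true → ∀ A, R.TV A → ∀ w,
      karr R.le (karr R.le (karr R.le A R.bot) R.bot) A w .cc)
    {Γ : List (Form NatSig)} {t : LC} {A : Form NatSig} (h : TypC NatSig E cl Γ t A) :
    ∀ e η, (∀ X l, R.TV (η X l)) → ∀ w σ,
      (∀ i B, Γ[i]? = some B → R.interp B e η w (σ i)) → R.interp A e η w (t.subst σ) := by
  induction h with
  | ccAx hcl =>
    intro e η hη w σ hσ Φ
    exact hcc hcl (Φ.1 []) (Φ.2 []) w
  | var h => intro e η hη w σ hσ; exact hσ _ _ h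
  | @absI Γ A B t _ ih =>
    intro e η hη w σ hσ w' hw u hu
    refine R.sat (R.interp_TV B e η hη) (ts := []) ?_
    rw [LC.lift_subst0]
    refine ih e η hη w' _ ?_
    intro i C hC
    cases i with
    | zero =>
      simp at hC
      subst hC
      exact hu
    | succ j =>
      simp at hC
      exact R.mono (R.interp_TV C e η hη) hw (hσ j C hC)
  | appE _ _ ih1 ih2 =>
    intro e η hη w σ hσ
    exact ih1 e η hη w σ hσ w (R.refl w) _ (ih2 e η hη w σ hσ)
  | fallI _ ih =>
    intro e η hη w σ hσ d
    refine ih _ η hη w σ ?_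
    intro i B hB
    rw [List.getElem?_map, Option.map_eq_some_iff] at hB
    obtain ⟨C, hC, rfl⟩ := hB
    unfold Form.shiftFO
    rw [interp_substFO]
    exact hσ i C hC
  | @fallE Γ t A u _ ih =>
    intro e η hη w σ hσ
    have := ih e η hη w σ hσ (evalT e u)
    unfold Form.substFO0
    rw [interp_substFO]
    convert this using 2 with i
    cases i <;> rfl
  | pallI _ ih =>
    intro e η hη w σ hσ Φ
    refine ih e _ ?_ w σ ?_
    · intro X l
      cases X with
      | zero => exact Φ.2 l
      | succ X => exact hη X l
    intro i B hB
    rw [List.getElem?_map, Option.map_eq_some_iff] at hB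
    obtain ⟨C, hC, rfl⟩ := hB
    rw [interp_rename2]
    exact hσ i C hC
  | @pallE Γ t A G _ ih =>
    intro e η hη w σ hσ
    have := ih e η hη w σ hσ ⟨fun l => R.interp G (lenv l e) η,
      fun l => R.interp_TV G _ _ hη⟩
    unfold Form.inst2_0
    rw [interp_inst2]
    convert this using 2
    funext i
    cases i with
    | zero => rfl
    | succ j => simp [ins, econs]
  | @eqE Γ t A u v _ huv ih =>
    intro e η hη w σ hσ
    have := ih e η hη w σ hσ
    unfold Form.substFO0 at this ⊢
    rw [interp_substFO] at this ⊢
    convert this using 2 with i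
    cases i with
    | zero => exact (EqE_eval hE huv e).symm
    | succ j => rfl

end RModel

theorem TypC_closed {E : Set (FOTerm NatSig × FOTerm NatSig)} {cl : Bool}
    {Γ : List (Form NatSig)} {t : LC} {A : Form NatSig} (h : TypC NatSig E cl Γ t A) :
    LC.ClosedUnder Γ.length t := by
  induction h with
  | ccAx _ => trivial
  | var h => exact (List.getElem?_eq_some_iff.1 h).1
  | absI _ ih => exact ih
  | appE _ _ ih1 ih2 => exact ⟨ih1, ih2⟩
  | fallI _ ih => simpa using ih
  | fallE _ _ ih => exact ih
  | pallI _ ih => simpa using ih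
  | pallE _ _ ih => exact ih
  | eqE _ _ ih => exact ih

theorem TypC_pure {E : Set (FOTerm NatSig × FOTerm NatSig)}
    {Γ : List (Form NatSig)} {t : LC} {A : Form NatSig} (h : TypC NatSig E false Γ t A) :
    LC.Pure t := by
  induction h with
  | ccAx h => exact absurd h (by decide)
  | var h => trivial
  | absI _ ih => exact ih
  | appE _ _ ih1 ih2 => exact ⟨ih1, ih2⟩
  | fallI _ ih => exact ih
  | fallE _ _ ih => exact ih
  | pallI _ ih => exact ih
  | pallE _ _ ih => exact ih
  | eqE _ _ ih => exact ih

/-- The intuitionistic model: all monotone saturated sets. -/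
def intModel {W : Type} (le : W → W → Prop) (hr : ∀ w, le w w)
    (ht : ∀ {a b c}, le a b → le b c → le a c) (bot : W → LC → Prop)
    (hm : ∀ {w w' t}, le w w' → bot w t → bot w' t)
    (hs : ∀ {w u t ts}, bot w (LC.appSpine (u.subst0 t) ts) →
      bot w (LC.appSpine (.app (.abs u) t) ts)) : RModel W where
  le := le
  refl := hr
  trans := ht
  TV := fun A => (∀ {w w' t}, le w w' → A w t → A w' t) ∧
    (∀ {w u t ts}, A w (LC.appSpine (u.subst0 t) ts) →
      A w (LC.appSpine (.app (.abs u) t) ts))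
  mono := fun h => h.1
  sat := fun h => h.2
  bot := bot
  bot_TV := ⟨hm, hs⟩
  arr_TV := by
    intro A B hA hB
    refine ⟨?_, ?_⟩
    · intro w w' t hw h w'' hw'' u hu
      exact h w'' (ht hw hw'') u hu
    · intro w u t ts h w' hw v hv
      have := h w' hw v hv
      have e : ∀ x : LC, LC.app (LC.appSpine x ts) v = LC.appSpine x (ts ++ [v]) := by
        intro x
        simp [LC.appSpine]
      rw [e] at this ⊢
      exact hB.2 this
  inter_TV := by
    intro ι F hF
    exact ⟨fun hw h i => (hF i).1 hw (h i), fun h i => (hF i).2 (h i)⟩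

/-- The orthogonal of a set of terms. -/
def orthS {W : Type} (le : W → W → Prop) (bot : W → LC → Prop) (A : W → LC → Prop)
    (w : W) (π : List LC) : Prop :=
  ∀ w', le w w' → ∀ u, A w' u → bot w' (LC.appSpine u π)

/-- The orthogonal of a set of stacks. -/
def orthT {W : Type} (le : W → W → Prop) (bot : W → LC → Prop) (P : W → List LC → Prop)
    (w : W) (t : LC) : Prop :=
  ∀ w', le w w' → ∀ π, P w' π → bot w' (LC.appSpine t π)

/-- The classical model: biorthogonally closed sets. -/
def claModel {W : Type} (le : W → W → Prop) (hr : ∀ w, le w w)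
    (ht : ∀ {a b c}, le a b → le b c → le a c) (bot : W → LC → Prop)
    (hm : ∀ {w w' t}, le w w' → bot w t → bot w' t)
    (hs : ∀ {w u v}, LC.HCStep u v → bot w v → bot w u) : RModel W where
  le := le
  refl := hr
  trans := ht
  TV := fun A => (∀ {w w' t}, le w w' → A w t → A w' t) ∧
    (∀ w t, orthT le bot (orthS le bot A) w t → A w t)
  mono := fun h => h.1
  sat := by
    intro A hA w u t ts h
    refine hA.2 _ _ ?_
    intro w' hw π hπ
    have := hπ w' (hr w') _ (hA.1 hw h)
    have e : ∀ x : LC, LC.appSpine (LC.appSpine x ts) π = LC.appSpine x (ts ++ π) := by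
      intro x
      simp [LC.appSpine]
    rw [e] at this ⊢
    exact hs (LC.HCStep.beta _ _ _) this
  bot := bot
  bot_TV := by
    refine ⟨hm, ?_⟩
    intro w t h
    exact h w (hr w) [] (fun w' _ u hu => hu)
  arr_TV := by
    intro A B hA hB
    refine ⟨?_, ?_⟩
    · intro w w' t hw h w'' hw'' u hu
      exact h w'' (ht hw hw'') u hu
    · intro w t h w1 hw1 u hu
      refine hB.2 _ _ ?_
      intro w2 hw2 π hπ
      refine h w2 (ht hw1 hw2) (u :: π) ?_
      intro w3 hw3 v hv
      exact hπ w3 hw3 _ (hv w3 (hr w3) u (hA.1 (ht hw2 hw3) hu))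
  inter_TV := by
    intro ι F hF
    refine ⟨fun hw h i => (hF i).1 hw (h i), ?_⟩
    intro w t h i
    refine (hF i).2 w t ?_
    intro w' hw π hπ
    exact h w' hw π (fun w'' hw'' u hu => hπ w'' hw'' u (hu i))

theorem orthT_TV {W : Type} {le : W → W → Prop} {hr : ∀ w, le w w}
    {ht : ∀ {a b c}, le a b → le b c → le a c} {bot : W → LC → Prop}
    {hm : ∀ {w w' t}, le w w' → bot w t → bot w' t}
    {hs : ∀ {w u v}, LC.HCStep u v → bot w v → bot w u} (P : W → List LC → Prop)
    (hP : ∀ {w w' π}, le w w' → P w π → P w' π) :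
    (claModel le hr ht bot hm hs).TV (orthT le bot P) := by
  refine ⟨?_, ?_⟩
  · intro w w' t hw h w'' hw'' π hπ
    exact h w'' (ht hw hw'') π hπ
  · intro w t h w' hw π hπ
    refine h w' hw π ?_
    intro w'' hw'' u hu
    exact hu w'' (hr w'') π (hP hw'' hπ)

theorem claModel_cc {W : Type} {le : W → W → Prop} {hr : ∀ w, le w w}
    {ht : ∀ {a b c}, le a b → le b c → le a c} {bot : W → LC → Prop}
    {hm : ∀ {w w' t}, le w w' → bot w t → bot w' t}
    {hs : ∀ {w u v}, LC.HCStep u v → bot w v → bot w u} :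
    ∀ A, (claModel le hr ht bot hm hs).TV A → ∀ w,
      karr le (karr le (karr le A bot) bot) A w .cc := by
  intro A hA w w1 hw1 t h
  refine hA.2 _ _ ?_
  intro w2 hw2 π hπ
  refine hs (LC.HCStep.cred t π) ?_
  refine h w2 hw2 _ ?_
  intro w3 hw3 u hu
  refine hs (LC.HCStep.beta _ _ []) ?_
  have : (LC.appSpine (.var 0) (π.map (LC.rename (· + 1)))).subst0 u = LC.appSpine u π := by
    rw [LC.subst0_eq, LC.appSpine_subst, List.map_map]
    congr 1
    conv_rhs => rw [← List.map_id π]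
    apply List.map_congr_left
    intro a _
    simp only [Function.comp, LC.rename_subst, LC.scons]
    exact LC.subst_var a
  show bot w3 (LC.appSpine ((LC.appSpine (.var 0) (π.map (LC.rename (· + 1)))).subst0 u) [])
  rw [this]
  exact hπ w3 hw3 u hu


/- ### The canonical run -/

/-- The role of a variable created during a run. -/
structure Role where
  kp : ℕ
  a : LC
  b : LC
  m : ℕ

/-- Canonical runs ending with `(f)τ`. -/
inductive Runs (n : ℕ) (τ : LC) : List Role → LC → Prop
  | done (ρ : List Role) : Runs n τ ρ (.app (.var 0) τ)
  | step {ρ : List Role} (u t : LC) (ts : List LC) : Runs n τ ρ (LC.appSpine (u.subst0 t) ts) →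
      Runs n τ ρ (LC.appSpine (.app (.abs u) t) ts)
  | nu0 {ρ : List Role} (a b c : LC) : n = 0 → Runs n τ ρ (.app a c) →
      Runs n τ ρ (.app (.app (.app (.var 1) a) b) c)
  | nuS {ρ : List Role} (a b c : LC) (m : ℕ) : n = m + 1 →
      Runs n τ (ρ ++ [⟨ρ.length, a, b, m⟩]) (.app (.app b (.var (ρ.length + 2))) c) →
      Runs n τ ρ (.app (.app (.app (.var 1) a) b) c)
  | call0 {ρ : List Role} (k : ℕ) (r : Role) (d : LC) : ρ[k]? = some r → r.m = 0 →
      Runs n τ ρ (.app r.a d) → Runs n τ ρ (.app (.var (k + 2)) d)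
  | callS {ρ : List Role} (k : ℕ) (r : Role) (d : LC) (m : ℕ) : ρ[k]? = some r → r.m = m + 1 →
      Runs n τ (ρ ++ [(⟨r.kp, r.a, r.b, m⟩ : Role)]) (.app (.app r.b (.var (ρ.length + 2))) d) →
      Runs n τ ρ (.app (.var (k + 2)) d)

theorem LC.beta_appSpine (ts : List LC) : ∀ {u v : LC}, LC.Beta u v →
    LC.Beta (LC.appSpine u ts) (LC.appSpine v ts) := by
  induction ts with
  | nil => intro u v h; exact h
  | cons a ts ih => intro u v h; exact ih (LC.Beta.appL a h)

theorem LC.BetaS.appR (g : LC) {u v : LC} (h : Relation.ReflTransGen LC.Beta u v) :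
    Relation.ReflTransGen LC.Beta (.app g u) (.app g v) := by
  induction h with
  | refl => exact Relation.ReflTransGen.refl
  | tail _ h ih => exact ih.tail (LC.Beta.appR _ h)

/-- Bottom of the first model. -/
def botA (n : ℕ) (ρ : List Role) (s : LC) : Prop :=
  ∀ ρ', ρ <+: ρ' → s.Pure → LC.ClosedUnder (ρ'.length + 2) s →
    ∃ τ : LC, τ.Pure ∧ Relation.ReflTransGen LC.Beta τ (LC.church n) ∧ Runs n τ ρ' s

/-- The first model. -/
def modA (n : ℕ) : RModel (List Role) :=
  intModel (fun ρ ρ' => ρ <+: ρ') (fun ρ => List.prefix_refl ρ)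
    (fun h h' => List.IsPrefix.trans h h') (botA n)
    (fun h h' ρ' hρ => h' ρ' (List.IsPrefix.trans h hρ))
    (by
      intro ρ u t ts h ρ' hρ hp hc
      obtain ⟨τ, h1, h2, h3⟩ := h ρ' hρ (LC.pure_beta hp) (LC.closed_beta hc)
      exact ⟨τ, h1, h2, Runs.step u t ts h3⟩)

theorem prefix_get {ρ ρ' : List Role} (h : ρ <+: ρ') {k : ℕ} {r : Role}
    (hk : ρ[k]? = some r) : ρ'[k]? = some r := by
  obtain ⟨l, rfl⟩ := h
  have := (List.getElem?_eq_some_iff.1 hk).1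
  rw [List.getElem?_append_left this]
  exact hk

theorem prefix_len {ρ ρ' : List Role} (h : ρ <+: ρ') : ρ.length ≤ ρ'.length := h.length_le

theorem f_real (n : ℕ) (e : ℕ → ℕ) (η : ℕ → List ℕ → List Role → LC → Prop)
    (u : FOTerm NatSig) (hu : evalT e u = n) (ρ : List Role) :
    (modA n).interp (.neg (NForm u)) e η ρ (.var 0) := by
  intro ρ1 h1 t ht ρ2 h2 hp hc
  refine ⟨t, hp.2, ?_, Runs.done _⟩
  refine LC.church_extract hc.2 ?_
  have key := ht ⟨fun l _ u => Relation.ReflTransGen LC.Beta u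
    (LC.iterApp (.var (ρ2.length + 2 + 1)) (l.headD 0) (.var (ρ2.length + 2))), by
      intro l
      refine ⟨fun _ h => h, ?_⟩
      intro w u t ts h
      exact Relation.ReflTransGen.head (LC.beta_appSpine ts (LC.Beta.beta u t)) h⟩
  have := key ρ1 (List.prefix_refl _) (.var (ρ2.length + 2)) Relation.ReflTransGen.refl
    ρ1 (List.prefix_refl _) (.var (ρ2.length + 2 + 1)) (by
      intro d w' _ v hv
      have hv' : Relation.ReflTransGen LC.Beta v
        (LC.iterApp (.var (ρ2.length + 2 + 1)) d (.var (ρ2.length + 2))) := hv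
      show Relation.ReflTransGen LC.Beta _ (LC.app _ (LC.iterApp (.var (ρ2.length + 2 + 1)) d (.var (ρ2.length + 2))))
      exact LC.BetaS.appR _ hv')
  have e2 : (([u].map (evalT e)).headD 0) = n := hu
  change Relation.ReflTransGen LC.Beta _ (LC.iterApp _ (([u].map (evalT e)).headD 0) _) at this
  rw [e2] at this
  exact this

theorem role_real (n : ℕ) (Φ : List ℕ → List Role → LC → Prop)
    (hΦ : ∀ l ρ ρ' t, ρ <+: ρ' → Φ l ρ t → Φ l ρ' t) (m : ℕ) :
    ∀ (ρ : List Role) (k : ℕ) (r : Role), ρ[k]? = some r → r.m = m →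
      karr (modA n).le (Φ [0]) (botA n) ρ r.a →
      (∀ d : ℕ, karr (modA n).le (karr (modA n).le (Φ [d]) (botA n))
        (karr (modA n).le (Φ [d+1]) (botA n)) ρ r.b) →
      r.a.Pure → r.b.Pure → LC.ClosedUnder (ρ.length + 2) r.a →
      LC.ClosedUnder (ρ.length + 2) r.b →
      karr (modA n).le (Φ [m]) (botA n) ρ (.var (k + 2)) := by
  induction m with
  | zero =>
    intro ρ k r hk hm ha hb pa pb ca cb ρ1 h1 c hc ρ2 h2 hp hcl
    have h02 := List.IsPrefix.trans h1 h2
    obtain ⟨τ, t1, t2, t3⟩ := ha ρ1 h1 c hc ρ2 h2 ⟨pa, hp.2⟩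
      ⟨LC.closed_mono _ _ _ (by have := prefix_len h02; omega) ca, hcl.2⟩
    exact ⟨τ, t1, t2, Runs.call0 k r c (prefix_get h02 hk) hm t3⟩
  | succ m ih =>
    intro ρ k r hk hm ha hb pa pb ca cb ρ1 h1 c hc ρ2 h2 hp hcl
    have h02 := List.IsPrefix.trans h1 h2
    have hl := prefix_len h02
    have h23 : ρ2 <+: ρ2 ++ [⟨r.kp, r.a, r.b, m⟩] := List.prefix_append _ _
    have h03 := List.IsPrefix.trans h02 h23
    have hv := ih (ρ2 ++ [(⟨r.kp, r.a, r.b, m⟩ : Role)]) ρ2.length ⟨r.kp, r.a, r.b, m⟩ (by simp) rfl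
      (fun w (hw : _ <+: w) => ha w (List.IsPrefix.trans h03 hw))
      (fun d w (hw : _ <+: w) => hb d w (List.IsPrefix.trans h03 hw)) pa pb
      (LC.closed_mono _ _ _ (by simp; omega) ca) (LC.closed_mono _ _ _ (by simp; omega) cb)
    obtain ⟨τ, t1, t2, t3⟩ := hb m _ h03 _ hv _ (List.prefix_refl _) c
      (hΦ _ _ _ _ (List.IsPrefix.trans h2 h23) hc) _ (List.prefix_refl _)
      ⟨⟨pb, trivial⟩, hp.2⟩
      ⟨⟨LC.closed_mono _ _ _ (by simp; omega) cb, by simp [LC.ClosedUnder]⟩,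
        LC.closed_mono _ _ _ (by simp) hcl.2⟩
    exact ⟨τ, t1, t2, Runs.callS k r c m (prefix_get h02 hk) hm t3⟩

theorem nu_real (n : ℕ) (e : ℕ → ℕ) (η : ℕ → List ℕ → List Role → LC → Prop)
    (u : FOTerm NatSig) (hu : evalT e u = n) (ρ : List Role) :
    (modA n).interp (NForm u).godel e η ρ (.var 1) := by
  intro Φ ρ1 h1 a ha ρ2 h2 b hb ρ3 h3 c hc ρ4 h4 hp hcl
  have hc' : Φ.1 [n] ρ3 c := by rw [← hu]; exact hc
  have h24 := List.IsPrefix.trans h3 h4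
  have h14 := List.IsPrefix.trans h2 h24
  obtain ⟨⟨⟨_, pa⟩, pb⟩, pc⟩ := hp
  obtain ⟨⟨⟨_, ca⟩, cb⟩, cc⟩ := hcl
  cases hn : n with
  | zero =>
    subst hn
    obtain ⟨τ, t1, t2, t3⟩ := ha ρ3 (List.IsPrefix.trans h2 h3) c hc' ρ4 h4 ⟨pa, pc⟩ ⟨ca, cc⟩
    exact ⟨τ, t1, t2, Runs.nu0 a b c rfl t3⟩
  | succ m =>
    rw [hn] at hc'
    have h45 : ρ4 <+: ρ4 ++ [⟨ρ4.length, a, b, m⟩] := List.prefix_append _ _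
    have hv := role_real n Φ.1 (fun l ρ ρ' t h h' => (Φ.2 l).1 h h') m
      (ρ4 ++ [(⟨ρ4.length, a, b, m⟩ : Role)]) ρ4.length ⟨ρ4.length, a, b, m⟩ (by simp) rfl
      (fun w (hw : _ <+: w) => ha w (List.IsPrefix.trans (List.IsPrefix.trans h14 h45) hw))
      (fun d w (hw : _ <+: w) => hb d w (List.IsPrefix.trans (List.IsPrefix.trans h24 h45) hw)) pa pb
      (LC.closed_mono _ _ _ (by simp) ca) (LC.closed_mono _ _ _ (by simp) cb)
    obtain ⟨τ, t1, t2, t3⟩ := hb m _ (List.IsPrefix.trans h24 h45) _ hv _ (List.prefix_refl _) c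
      ((Φ.2 _).1 (List.IsPrefix.trans h4 h45) hc') _ (List.prefix_refl _)
      ⟨⟨pb, trivial⟩, pc⟩
      ⟨⟨LC.closed_mono _ _ _ (by simp) cb, by simp [LC.ClosedUnder]⟩,
        LC.closed_mono _ _ _ (by simp) cc⟩
    rw [hn] at t2 t3
    exact ⟨τ, t1, t2, Runs.nuS a b c m rfl t3⟩

theorem canonical_run {E : Set (FOTerm NatSig × FOTerm NatSig)} (hE : Adequate E)
    {T : LC} (hT : TypC NatSig E false [] T storType) (n : ℕ) :
    ∃ τ : LC, τ.Pure ∧ Relation.ReflTransGen LC.Beta τ (LC.church n) ∧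
      Runs n τ [] (.app (.app T (.var 1)) (.var 0)) := by
  have hcl : LC.Closed T := TypC_closed hT
  have h := (modA n).adequacy hE (by simp) hT (fun _ => 0) (fun _ _ => botA n)
    (fun _ _ => (modA n).bot_TV) [] LC.var (by simp) n [] (List.prefix_refl _) (.var 1)
    (nu_real n _ _ _ rfl []) [] (List.prefix_refl _) (.var 0) (f_real n _ _ _ rfl [])
    [] (List.prefix_refl _)
  rw [LC.subst_var] at h
  exact h ⟨⟨TypC_pure hT, trivial⟩, trivial⟩
    ⟨⟨LC.closed_mono _ 0 _ (by simp) hcl, by simp [LC.ClosedUnder]⟩, by simp [LC.ClosedUnder]⟩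

/- ### Termination of the actual run -/

theorem terminates {E : Set (FOTerm NatSig × FOTerm NatSig)} (hE : Adequate E)
    {T : LC} (hT : TypC NatSig E false [] T storType) {n : ℕ} {θ : LC}
    (hθ : TypC NatSig E true [] θ (NForm (numT n))) :
    ∃ t, LC.HCRed (.app (.app T θ) (.var 0)) (.app (.var 0) t) := by
  have cT : LC.Closed T := TypC_closed hT
  have cθ : LC.Closed θ := TypC_closed hθ
  let bot : Unit → LC → Prop := fun _ u => ∃ t, LC.HCRed u (.app (.var 0) t)
  let R : RModel Unit := claModel (fun _ _ => True) (fun _ => trivial) (fun _ _ => trivial)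
    bot (fun _ h => h)
    (fun h h' => by obtain ⟨t, ht⟩ := h'; exact ⟨t, Relation.ReflTransGen.head h ht⟩)
  have h1 := R.adequacy hE (fun _ => claModel_cc) hθ (fun _ => n) (fun _ _ => bot)
    (fun _ _ => R.bot_TV) () LC.var (by simp)
  have h2 := R.adequacy hE (by simp) hT (fun _ => n) (fun _ _ => bot)
    (fun _ _ => R.bot_TV) () LC.var (by simp) n () trivial θ (by
      intro Φ
      have := h1 ⟨fun l => karr R.le (Φ.1 l) R.bot, fun l => R.arr_TV (Φ.2 l) R.bot_TV⟩
      have e1 : evalT (fun _ => n) (numT n) = n := evalT_num _ _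
      simp only [RModel.interp, List.map, e1] at this
      rw [LC.subst_var] at this
      exact this) () trivial (.var 0) (by
      intro w _ t _
      exact ⟨t, Relation.ReflTransGen.refl⟩)
  rw [LC.subst_var] at h2
  rw [LC.subst_var] at h1
  exact h2

/- ### Step-indexed safety -/

/-- Being safe for a given number of steps. -/
def pole (τ : LC) : ℕ → LC → Prop
  | 0, _ => True
  | N+1, u => (∃ σ : ℕ → LC, σ 0 = .var 0 ∧ u = .app (.var 0) (τ.subst σ)) ∨
      ∃ u', LC.HCStep u u' ∧ pole τ N u'

theorem pole_succ (τ : LC) (N : ℕ) : ∀ u, pole τ (N+1) u → pole τ N u := by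
  induction N with
  | zero => intros; trivial
  | succ N ih =>
    intro u h
    rcases h with h | ⟨u', h1, h2⟩
    · exact Or.inl h
    · exact Or.inr ⟨u', h1, ih u' h2⟩

theorem pole_mono {τ : LC} {N M : ℕ} (h : M ≤ N) {u : LC} (hu : pole τ N u) : pole τ M u := by
  induction h with
  | refl => exact hu
  | step _ ih => exact ih (pole_succ _ _ _ hu)

theorem pole_anti {τ : LC} {N : ℕ} {u v : LC} (h : LC.HCStep u v) (hv : pole τ N v) :
    pole τ N u :=
  pole_succ τ N u (Or.inr ⟨v, h, hv⟩)

/-- Well-formed lists of roles. -/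
def WF (n : ℕ) (ρ : List Role) : Prop :=
  ∀ (k : ℕ) (r : Role), ρ[k]? = some r → r.kp ≤ k ∧ r.m < n ∧ LC.ClosedUnder (r.kp + 2) r.a ∧
    LC.ClosedUnder (r.kp + 2) r.b

/-- Agreement of two states below `kp`. -/
def Agree (kp : ℕ) (ρ : List Role) (σ : ℕ → LC) (ρ' : List Role) (σ' : ℕ → LC) : Prop :=
  ∀ j < kp, ρ[j]? = ρ'[j]? ∧ σ (j + 2) = σ' (j + 2)

theorem Agree.symm {kp : ℕ} {ρ ρ' : List Role} {σ σ' : ℕ → LC} (h : Agree kp ρ σ ρ' σ') :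
    Agree kp ρ' σ' ρ σ :=
  fun j hj => ⟨(h j hj).1.symm, (h j hj).2.symm⟩

theorem Agree.trans {kp : ℕ} {ρ ρ' ρ'' : List Role} {σ σ' σ'' : ℕ → LC}
    (h : Agree kp ρ σ ρ' σ') (h' : Agree kp ρ' σ' ρ'' σ'') : Agree kp ρ σ ρ'' σ'' :=
  fun j hj => ⟨(h j hj).1.trans (h' j hj).1, (h j hj).2.trans (h' j hj).2⟩

theorem Agree.mono {kp kp' : ℕ} {ρ ρ' : List Role} {σ σ' : ℕ → LC} (h : Agree kp ρ σ ρ' σ')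
    (hk : kp' ≤ kp) : Agree kp' ρ σ ρ' σ' :=
  fun j hj => h j (lt_of_lt_of_le hj hk)

/-- A substitution all of whose components are good. -/
def Weak (θ : LC) (G : List Role → Role → (ℕ → LC) → LC → Prop) (ρ : List Role)
    (σ : ℕ → LC) : Prop :=
  σ 0 = .var 0 ∧ σ 1 = θ ∧ ∀ k r, ρ[k]? = some r → G ρ r σ (σ (k + 2))

/-- Terms that behave as prescribed by their role. -/
def Good (n : ℕ) (τ θ : LC) : ℕ → List Role → Role → (ℕ → LC) → LC → Prop
  | 0 => fun _ _ _ _ => True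
  | N+1 => fun ρ r σ t => Good n τ θ N ρ r σ t ∧
      ∀ (ρ' : List Role) (σ' : ℕ → LC) (k : ℕ) (d : LC), WF n ρ' →
        Runs n τ ρ' (.app (.var (k + 2)) d) → ρ'[k]? = some r →
        LC.ClosedUnder (ρ'.length + 2) d → Agree r.kp ρ σ ρ' σ' →
        Weak θ (Good n τ θ N) ρ' σ' → pole τ N (.app t (d.subst σ'))

theorem Good.mono {n : ℕ} {τ θ : LC} {N M : ℕ} (h : M ≤ N) {ρ : List Role} {r : Role}
    {σ : ℕ → LC} {t : LC} (hg : Good n τ θ N ρ r σ t) : Good n τ θ M ρ r σ t := by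
  induction h with
  | refl => exact hg
  | step _ ih => exact ih hg.1

theorem Good.transfer {n : ℕ} {τ θ : LC} {N : ℕ} {ρ : List Role} {r : Role}
    {σ : ℕ → LC} {t : LC} {ρ2 : List Role} {σ2 : ℕ → LC} (ha : Agree r.kp ρ σ ρ2 σ2)
    (hg : Good n τ θ N ρ r σ t) : Good n τ θ N ρ2 r σ2 t := by
  induction N with
  | zero => trivial
  | succ N ih =>
    refine ⟨ih hg.1, ?_⟩
    intro ρ' σ' k d h1 h2 h3 h4 h5 h6
    exact hg.2 ρ' σ' k d h1 h2 h3 h4 (ha.trans h5) h6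

theorem Weak.mono {n : ℕ} {τ θ : LC} {N M : ℕ} (h : M ≤ N) {ρ : List Role}
    {σ : ℕ → LC} (hw : Weak θ (Good n τ θ N) ρ σ) : Weak θ (Good n τ θ M) ρ σ :=
  ⟨hw.1, hw.2.1, fun k r hk => (hw.2.2 k r hk).mono h⟩

theorem get_append {ρ : List Role} {r r' : Role} {k : ℕ} (h : (ρ ++ [r])[k]? = some r') :
    (k < ρ.length ∧ ρ[k]? = some r') ∨ (k = ρ.length ∧ r' = r) := by
  rcases lt_trichotomy k ρ.length with hk | hk | hk
  · left
    rw [List.getElem?_append_left hk] at h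
    exact ⟨hk, h⟩
  · right
    subst hk
    simp at h
    exact ⟨rfl, h.symm⟩
  · exfalso
    have := (List.getElem?_eq_some_iff.1 h).1
    simp at this
    omega

theorem WF.ext {n : ℕ} {ρ : List Role} (h : WF n ρ) {r : Role} (h1 : r.kp ≤ ρ.length)
    (h2 : r.m < n) (h3 : LC.ClosedUnder (r.kp + 2) r.a) (h4 : LC.ClosedUnder (r.kp + 2) r.b) :
    WF n (ρ ++ [r]) := by
  intro k r' hk
  rcases get_append hk with ⟨_, hk'⟩ | ⟨rfl, rfl⟩
  · exact h k r' hk'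
  · exact ⟨h1, h2, h3, h4⟩

theorem agree_ext {ρ : List Role} {σ : ℕ → LC} {r : Role} {t : LC} {kp : ℕ}
    (h : kp ≤ ρ.length) :
    Agree kp ρ σ (ρ ++ [r]) (Function.update σ (ρ.length + 2) t) := by
  intro j hj
  have hj' : j < ρ.length := lt_of_lt_of_le hj h
  refine ⟨(List.getElem?_append_left hj').symm, ?_⟩
  rw [Function.update_of_ne (by omega)]

theorem Weak.ext {n : ℕ} {τ θ : LC} {N : ℕ} {ρ : List Role} {σ : ℕ → LC} (hwf : WF n ρ)
    (hw : Weak θ (Good n τ θ N) ρ σ) {r : Role} {t : LC} (hr : r.kp ≤ ρ.length)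
    (hg : Good n τ θ N ρ r σ t) :
    Weak θ (Good n τ θ N) (ρ ++ [r]) (Function.update σ (ρ.length + 2) t) := by
  refine ⟨?_, ?_, ?_⟩
  · rw [Function.update_of_ne (by omega)]
    exact hw.1
  · rw [Function.update_of_ne (by omega)]
    exact hw.2.1
  · intro k r' hk
    rcases get_append hk with ⟨hk1, hk'⟩ | ⟨rfl, rfl⟩
    · rw [Function.update_of_ne (by omega)]
      refine (hw.2.2 k r' hk').transfer (agree_ext ?_)
      have := (hwf k r' hk').1
      omega
    · rw [Function.update_self]
      exact hg.transfer (agree_ext hr)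

theorem Runs.inv {n : ℕ} {τ : LC} {ρ : List Role} {k : ℕ} {d : LC} {r : Role}
    (h : Runs n τ ρ (.app (.var (k + 2)) d)) (hk : ρ[k]? = some r) :
    (r.m = 0 ∧ Runs n τ ρ (.app r.a d)) ∨ ∃ m, r.m = m + 1 ∧
      Runs n τ (ρ ++ [⟨r.kp, r.a, r.b, m⟩]) (.app (.app r.b (.var (ρ.length + 2))) d) := by
  generalize hx : LC.app (.var (k + 2)) d = x at h
  cases h with
  | done => simp at hx
  | step u t ts _ =>
    exfalso
    have := congrArg LC.spine hx
    rw [LC.spine_appSpine] at this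
    simp [LC.spine] at this
  | nu0 a b c _ _ => simp at hx
  | nuS a b c _ _ => simp at hx
  | call0 k' r' d' h1 h2 h3 =>
    simp at hx
    obtain ⟨rfl, rfl⟩ := hx
    rw [h1] at hk
    cases hk
    exact Or.inl ⟨h2, h3⟩
  | callS k' r' d' m h1 h2 h3 =>
    simp at hx
    obtain ⟨rfl, rfl⟩ := hx
    rw [h1] at hk
    cases hk
    exact Or.inr ⟨m, h2, h3⟩

/-- The statement of the safety lemma. -/
def Safe (n : ℕ) (τ θ : LC) (N : ℕ) : Prop :=
  ∀ ρ s, Runs n τ ρ s → WF n ρ → LC.ClosedUnder (ρ.length + 2) s →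
    ∀ σ, Weak θ (Good n τ θ N) ρ σ →
      (∀ k d r, s = .app (.var (k + 2)) d → ρ[k]? = some r →
        Good n τ θ (N+1) ρ r σ (σ (k + 2))) →
      pole τ N (s.subst σ)

/-- The tests used in a session. -/
def Tests (n : ℕ) (τ θ : LC) (N : ℕ) (ρ : List Role) (σ : ℕ → LC) (a b c : LC) (m M : ℕ)
    (π : List LC) : Prop :=
  ∃ d, π = [d] ∧ ((m = n ∧ d = c.subst σ) ∨
    (M < N ∧ ∃ (ρ' : List Role) (σ' : ℕ → LC) (k : ℕ) (d0 : LC), WF n ρ' ∧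
      Runs n τ ρ' (.app (.var (k + 2)) d0) ∧ ρ'[k]? = some ⟨ρ.length, a, b, m⟩ ∧
      LC.ClosedUnder (ρ'.length + 2) d0 ∧ Agree ρ.length ρ σ ρ' σ' ∧
      Weak θ (Good n τ θ M) ρ' σ' ∧ d = d0.subst σ'))

theorem subst_agree {ρ ρ' : List Role} {σ σ' : ℕ → LC} {kp : ℕ} (h0 : σ 0 = σ' 0)
    (h1 : σ 1 = σ' 1) (h : Agree kp ρ σ ρ' σ') {a : LC} (ha : LC.ClosedUnder (kp + 2) a) :
    a.subst σ = a.subst σ' := by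
  refine LC.subst_congr a (kp + 2) σ σ' ha ?_
  intro i hi
  match i with
  | 0 => exact h0
  | 1 => exact h1
  | j+2 => exact (h j (by omega)).2

theorem session {E : Set (FOTerm NatSig × FOTerm NatSig)} (hE : Adequate E) {n : ℕ} {τ θ : LC}
    (hθ : TypC NatSig E true [] θ (NForm (numT n))) {N : ℕ}
    (IH : ∀ M < N, Safe n τ θ M) {ρ : List Role} {σ : ℕ → LC} (hwf : WF n ρ)
    (hw : Weak θ (Good n τ θ N) ρ σ) {a b c : LC} (ca : LC.ClosedUnder (ρ.length + 2) a)
    (cb : LC.ClosedUnder (ρ.length + 2) b) (cc : LC.ClosedUnder (ρ.length + 2) c)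
    (h0 : n = 0 → pole τ N ((LC.app a c).subst σ))
    (hS : ∀ m, n = m + 1 →
      Runs n τ (ρ ++ [⟨ρ.length, a, b, m⟩]) (.app (.app b (.var (ρ.length + 2))) c) ∧
      ∀ σ', Weak θ (Good n τ θ N) (ρ ++ [⟨ρ.length, a, b, m⟩]) σ' →
        pole τ N ((LC.app (.app b (.var (ρ.length + 2))) c).subst σ')) :
    pole τ N (.app (.app (.app θ (a.subst σ)) (b.subst σ)) (c.subst σ)) := by
  have cθ : LC.Closed θ := TypC_closed hθ
  let R : RModel ℕ := claModel (fun w w' => w' ≤ w) (fun w => le_refl w)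
    (fun h h' => le_trans h' h) (pole τ) (fun h h' => pole_mono h h')
    (fun h h' => pole_anti h h')
  have hP : ∀ m, ∀ {w w' : ℕ} {π : List LC}, w' ≤ w → Tests n τ θ N ρ σ a b c m w π →
      Tests n τ θ N ρ σ a b c m w' π := by
    intro m w w' π hle h
    obtain ⟨d, h1, h2⟩ := h
    refine ⟨d, h1, ?_⟩
    rcases h2 with h2 | ⟨h2, ρ', σ', k, d0, t1, t2, t3, t4, t5, t6, t7⟩
    · exact Or.inl h2
    · exact Or.inr ⟨by omega, ρ', σ', k, d0, t1, t2, t3, t4, t5, t6.mono hle, t7⟩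
  have h1 := R.adequacy hE (fun _ => claModel_cc) hθ (fun _ => n) (fun _ _ => pole τ)
    (fun _ _ => R.bot_TV) N LC.var (by simp)
    ⟨fun l => orthT (fun w w' => w' ≤ w) (pole τ) (Tests n τ θ N ρ σ a b c (l.headD 0)),
      fun l => orthT_TV _ (hP _)⟩
  rw [LC.subst_var] at h1
  have e1 : evalT (fun _ => n) (numT n) = n := evalT_num _ _
  simp only [RModel.interp, List.map, e1] at h1
  refine h1 N (le_refl N) (a.subst σ) ?_ N (le_refl N) (b.subst σ) ?_ N (le_refl N)
    [c.subst σ] ⟨_, rfl, Or.inl ⟨rfl, rfl⟩⟩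
  · rintro M hM π ⟨d, rfl, h2⟩
    rcases h2 with ⟨hn, rfl⟩ | ⟨hMN, ρ', σ', k, d0, t1, t2, t3, t4, t5, t6, rfl⟩
    · exact pole_mono hM (h0 hn.symm)
    · have hk := (t1 k _ t3).1
      have hk' := (List.getElem?_eq_some_iff.1 t3).1
      simp only at hk
      rcases t2.inv t3 with ⟨_, hr⟩ | ⟨m, hm, _⟩
      · have := IH M hMN ρ' _ hr t1 ⟨LC.closed_mono _ _ _ (by omega) ca, t4⟩ σ' t6 (by
          intro j d r' he hj
          simp only [LC.app.injEq] at he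
          obtain ⟨rfl, rfl⟩ := he
          have hjl : j < ρ.length := by
            have : j + 2 < ρ.length + 2 := ca
            omega
          obtain ⟨g1, g2⟩ := t5 j hjl
          rw [hj] at g1
          have g3 := (hw.2.2 j r' g1).mono (M := M + 1) (by omega)
          rw [g2] at g3
          refine g3.transfer (t5.mono ?_)
          have := (hwf j r' g1).1
          omega)
        have e2 := subst_agree (hw.1.trans t6.1.symm) (hw.2.1.trans t6.2.1.symm) t5 ca
        show pole τ M (.app (a.subst σ) (d0.subst σ'))
        rw [e2]
        exact this
      · change 0 = m + 1 at hm
        omega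
  · intro y M1 hM1 t ht M hM π hπ
    have hM1' : M1 ≤ N := hM1
    have hM' : M ≤ M1 := hM
    have good : ∀ M2, M2 ≤ M1 → Good n τ θ M2 ρ ⟨ρ.length, a, b, y⟩ σ t := by
      intro M2
      induction M2 with
      | zero => intro _; trivial
      | succ M2 ih =>
        intro hle
        refine ⟨ih (by omega), ?_⟩
        intro ρ' σ' k d g1 g2 g3 g4 g5 g6
        exact ht M2 (show M2 ≤ M1 by omega) [d.subst σ'] ⟨_, rfl, Or.inr ⟨by omega, ρ', σ', k, d,
          g1, g2, g3, g4, g5, g6, rfl⟩⟩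
    obtain ⟨d, rfl, h2⟩ := hπ
    rcases h2 with ⟨hn, rfl⟩ | ⟨hMN, ρ', σ', k, d0, t1, t2, t3, t4, t5, t6, rfl⟩
    · have hn' : n = y + 1 := hn.symm
      obtain ⟨s1, s2⟩ := hS y hn'
      have wk : Weak θ (Good n τ θ M) (ρ ++ [⟨ρ.length, a, b, y⟩])
          (Function.update σ (ρ.length + 2) t) :=
        (hw.mono (hM'.trans hM1')).ext hwf (le_refl _) (good M hM')
      have ag : Agree ρ.length ρ σ (ρ ++ [⟨ρ.length, a, b, y⟩])
        (Function.update σ (ρ.length + 2) t) := agree_ext (le_refl _)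
      have res : pole τ M ((LC.app (.app b (.var (ρ.length + 2))) c).subst
          (Function.update σ (ρ.length + 2) t)) := by
        rcases eq_or_lt_of_le (hM'.trans hM1') with hMN | hMN
        · subst hMN
          exact s2 _ wk
        · refine IH M hMN _ _ s1 (hwf.ext (le_refl _) (by simp; omega) ca cb) ?_ _ wk ?_
          · refine ⟨⟨LC.closed_mono _ _ _ (by simp) cb, by simp [LC.ClosedUnder]⟩,
              LC.closed_mono _ _ _ (by simp) cc⟩
          · intro k d r he
            simp at he
      have e2 := subst_agree (hw.1.trans wk.1.symm) (hw.2.1.trans wk.2.1.symm) ag cb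
      have e3 := subst_agree (hw.1.trans wk.1.symm) (hw.2.1.trans wk.2.1.symm) ag cc
      simp only [LC.subst, Function.update_self, ← e2, ← e3] at res
      exact res
    · have hk := (t1 k _ t3).1
      have hk' := (List.getElem?_eq_some_iff.1 t3).1
      have hyn := (t1 k _ t3).2.1
      simp only at hk
      change y + 1 < n at hyn
      rcases t2.inv t3 with ⟨hm, _⟩ | ⟨m, hm, hr⟩
      · change y + 1 = 0 at hm
        omega
      · change y + 1 = m + 1 at hm
        have hm' : m = y := by omega
        subst hm'
        simp only at hr
        have wk : Weak θ (Good n τ θ M) (ρ' ++ [⟨ρ.length, a, b, m⟩])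
            (Function.update σ' (ρ'.length + 2) t) :=
          t6.ext t1 (by simp only; omega) ((good M hM').transfer t5)
        have ag : Agree ρ'.length ρ' σ' (ρ' ++ [⟨ρ.length, a, b, m⟩])
          (Function.update σ' (ρ'.length + 2) t) := agree_ext (le_refl _)
        have res : pole τ M ((LC.app (.app b (.var (ρ'.length + 2))) d0).subst
            (Function.update σ' (ρ'.length + 2) t)) := by
          refine IH M hMN _ _ hr (t1.ext (by simp only; omega) (by simp only; omega) ca cb) ?_ _ wk ?_
          · refine ⟨⟨LC.closed_mono _ _ _ (by simp; omega) cb, by simp [LC.ClosedUnder]⟩,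
              LC.closed_mono _ _ _ (by simp) t4⟩
          · intro k d r he
            simp at he
        have e2 := subst_agree (hw.1.trans wk.1.symm) (hw.2.1.trans wk.2.1.symm)
          (t5.trans (ag.mono (by omega))) cb
        have e3 := subst_agree (t6.1.trans wk.1.symm) (t6.2.1.trans wk.2.1.symm) ag t4
        simp only [LC.subst, Function.update_self, ← e2, ← e3] at res
        exact res

theorem safety {E : Set (FOTerm NatSig × FOTerm NatSig)} (hE : Adequate E) {n : ℕ} {τ θ : LC}
    (hθ : TypC NatSig E true [] θ (NForm (numT n))) (N : ℕ) : Safe n τ θ N := by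
  induction N using Nat.strong_induction_on with
  | _ N IH =>
    intro ρ s hs
    induction hs with
    | done ρ =>
      intro hwf hc σ hw _
      cases N with
      | zero => trivial
      | succ N =>
        refine Or.inl ⟨σ, hw.1, ?_⟩
        simp only [LC.subst, hw.1]
    | @step ρ u t ts hr _ =>
      intro hwf hc σ hw _
      cases N with
      | zero => trivial
      | succ N =>
        refine Or.inr ⟨_, (LC.HCStep.beta u t ts).subst σ, ?_⟩
        exact IH N (Nat.lt_succ_self N) ρ _ hr hwf (LC.closed_beta hc) σ (hw.mono (Nat.le_succ N))
          (fun k d r _ hk => hw.2.2 k r hk)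
    | @nu0 ρ a b c hn hr ih =>
      intro hwf hc σ hw _
      obtain ⟨⟨⟨_, ca⟩, cb⟩, cc⟩ := hc
      have := session hE hθ IH hwf hw ca cb cc (fun _ => ih hwf ⟨ca, cc⟩ σ hw (by
          intro k d r _ hk
          have := (hwf k r hk).2.1
          omega)) (by intro m hm; omega)
      simp only [LC.subst, hw.2.1]
      exact this
    | @nuS ρ a b c m hn hr ih =>
      intro hwf hc σ hw _
      obtain ⟨⟨⟨_, ca⟩, cb⟩, cc⟩ := hc
      have := session hE hθ IH hwf hw ca cb cc (by intro h; omega) (by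
          intro m' hm
          have hmm : m' = m := by omega
          subst hmm
          refine ⟨hr, fun σ' hσ' => ih (hwf.ext (le_refl _) (by simp only; omega) ca cb) ?_ σ' hσ' ?_⟩
          · refine ⟨⟨LC.closed_mono _ _ _ (by simp) cb, by simp [LC.ClosedUnder]⟩,
              LC.closed_mono _ _ _ (by simp) cc⟩
          · intro k d r he
            simp at he)
      simp only [LC.subst, hw.2.1]
      exact this
    | @call0 ρ k r d hk hm hr ih =>
      intro hwf hc σ hw hside
      exact (hside k d r rfl hk).2 ρ σ k d hwf (Runs.call0 k r d hk hm hr) hk hc.2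
        (fun j _ => ⟨rfl, rfl⟩) hw
    | @callS ρ k r d m hk hm hr ih =>
      intro hwf hc σ hw hside
      exact (hside k d r rfl hk).2 ρ σ k d hwf (Runs.callS k r d m hk hm hr) hk hc.2
        (fun j _ => ⟨rfl, rfl⟩) hw

theorem pole_extract {τ u t : LC} (h : LC.HCRed u (.app (.var 0) t))
    (hp : ∀ N, pole τ N u) :
    ∃ σ : ℕ → LC, σ 0 = .var 0 ∧ LC.HCRed u (.app (.var 0) (τ.subst σ)) := by
  induction h using Relation.ReflTransGen.head_induction_on with
  | refl =>
    rcases hp 1 with ⟨σ, h1, h2⟩ | ⟨u', h1, _⟩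
    · exact ⟨σ, h1, by rw [← h2]; exact Relation.ReflTransGen.refl⟩
    · exact (LC.HCStep.not_var (k := 0) (ts := [t]) h1).elim
  | @head u v huv _ ih =>
    obtain ⟨σ, h1, h2⟩ := ih (by
      intro N
      rcases hp (N+1) with ⟨σ, _, h2⟩ | ⟨u', h1, h2⟩
      · subst h2
        exact (LC.HCStep.not_var (k := 0) (ts := [τ.subst σ]) huv).elim
      · rw [huv.det h1]
        exact h2)
    exact ⟨σ, h1, Relation.ReflTransGen.head huv h2⟩

theorem BetaS.toEq {u v : LC} (h : Relation.ReflTransGen LC.Beta u v) : LC.BetaEq u v := by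
  induction h with
  | refl => exact Relation.EqvGen.refl _
  | tail _ h ih => exact Relation.EqvGen.trans _ _ _ ih (Relation.EqvGen.rel _ _ h)

open LC in
/-- Krivine's storage theorem for classical integers : if
`⊢_AF2 T : ∀x{N^g[x] → ¬¬N[x]}`, then for every `n` there is a λ-term
`τₙ ≃β n̲` such that for every classical integer `θₙ` of value `n` there is
a substitution `σ` with `(T)θₙf ≻_C (f)σ(τₙ)`
(and then `(T)θₙλx.x ≻_C σ′(τₙ) →β n̲`). -/
theorem stmt15 (E : Set (FOTerm NatSig × FOTerm NatSig)) (hE : Adequate E)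
    (T : LC) (hT : TypC NatSig E false [] T storType) :
    ∀ n : ℕ, ∃ τ : LC, Pure τ ∧ BetaEq τ (church n) ∧
      ∀ θ : LC, Closed θ → TypC NatSig E true [] θ (NForm (numT n)) →
        ∃ σ : ℕ → LC, σ 0 = var 0 ∧
          HCRed (app (app T θ) (var 0)) (app (var 0) (τ.subst σ)) ∧
          ∃ σ' : ℕ → LC,
            HCRed (app (app T θ) (abs (var 0))) (τ.subst σ') ∧
            Relation.ReflTransGen Beta (τ.subst σ') (church n) := by
  intro n
  obtain ⟨τ, h1, h2, h3⟩ := canonical_run hE hT n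
  refine ⟨τ, h1, BetaS.toEq h2, ?_⟩
  intro θ cθ hθ
  have cT : Closed T := TypC_closed hT
  obtain ⟨t, ht⟩ := terminates hE hT hθ
  have hp : ∀ N, pole τ N (app (app T θ) (var 0)) := by
    intro N
    have := safety hE (τ := τ) hθ N [] _ h3 (by intro k r hk; simp at hk)
      ⟨⟨closed_mono _ 0 _ (by simp) cT, by simp [ClosedUnder]⟩, by simp [ClosedUnder]⟩
      (fun i => match i with | 1 => θ | i => var i) ⟨rfl, rfl, by intro k r hk; simp at hk⟩
      (by intro k d r _ hk; simp at hk)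
    simp only [LC.subst, subst_closed cT] at this
    exact this
  obtain ⟨σ, s1, s2⟩ := pole_extract ht hp
  refine ⟨σ, s1, s2, fun i => (σ i).subst (scons (abs (var 0)) (fun i => var (i + 1))), ?_, ?_⟩
  · have := HCRed.subst s2 (scons (abs (var 0)) (fun i => var (i + 1)))
    simp only [LC.subst, subst_closed cT, subst_closed cθ, subst_subst] at this
    exact this.tail (HCStep.beta (var 0) _ [])
  · have := BetaS.subst h2 (fun i => (σ i).subst (scons (abs (var 0)) (fun i => var (i + 1))))
    rw [subst_closed (church_closed n)] at this
    exact this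
end

section
/- Parigot's storage theorem for λμ-calculus: if ⊢_AF2 T : ∀x{N^g[x] → ¬¬N[x]}, then T is a storage operator for classical integers in λμ-calculus, i.e. for every n ∈ ℕ there is a λ-term τₙ ≃β n̲ such that for every classical integer θₙ of value n (every closed λμ-term with ⊢_FD2 θₙ : N[sⁿ(0)]) there is a substitution σ with (T)θₙ f ∼_μ μα[α](f)σ(τₙ) (f a fresh variable). -/
/- The λμ-calculus (de Bruijn indices for both λ-variables and μ-variables).
A term `μα[β]t` is represented as `mu b t` where the binder binds `α`
(μ-index 0 inside `t`) and `b` is the μ-index of the name `β` (in the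
μ-context of `t`, which includes `α`). -/

inductive LM : Type
  | var : ℕ → LM
  | abs : LM → LM
  | app : LM → LM → LM
  | mu : ℕ → LM → LM

namespace LM

def liftρ (ρ : ℕ → ℕ) : ℕ → ℕ
  | 0 => 0
  | j+1 => ρ j + 1

/-- Renaming of the free λ-variables. -/
def renL (ρ : ℕ → ℕ) : LM → LM
  | var i => var (ρ i)
  | abs t => abs (t.renL (liftρ ρ))
  | app t u => app (t.renL ρ) (u.renL ρ)
  | mu b t => mu b (t.renL ρ)

/-- Renaming of the free μ-variables. -/
def renM (ρ : ℕ → ℕ) : LM → LM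
  | var i => var i
  | abs t => abs (t.renM ρ)
  | app t u => app (t.renM ρ) (u.renM ρ)
  | mu b t => mu (liftρ ρ b) (t.renM (liftρ ρ))

/-- Simultaneous substitution of λ-variables. -/
def substL (σ : ℕ → LM) : LM → LM
  | var i => σ i
  | abs t => abs (t.substL (fun i => match i with | 0 => var 0 | j+1 => (σ j).renL (· + 1)))
  | app t u => app (t.substL σ) (u.substL σ)
  | mu b t => mu b (t.substL (fun i => (σ i).renM (· + 1)))

/-- `u[v/x]` for the first λ-variable. -/
def subst0 (u v : LM) : LM :=
  u.substL (fun i => match i with | 0 => v | j+1 => var j)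

/-- `t[v/*α]` : replace inductively each subterm of the form `[α]w` by
`[α](w)v`, where `α` is the μ-variable of index `k` in the context of `t`. -/
def star (v : LM) : ℕ → LM → LM
  | _, var i => var i
  | k, abs t => abs (star (v.renL (· + 1)) k t)
  | k, app t u => app (star v k t) (star v k u)
  | k, mu b t =>
      mu b (if b = k+1 then app (star (v.renM (· + 1)) (k+1) t) (v.renM (· + 1))
            else star (v.renM (· + 1)) (k+1) t)

/-- The contractum of `(μα u)v → μα u[v/*α]` where `u = [b]t`. -/
def muApp (b : ℕ) (t v : LM) : LM :=
  mu b (if b = 0 then app (star (v.renM (· + 1)) 0 t) (v.renM (· + 1))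
        else star (v.renM (· + 1)) 0 t)

/-- The contractum of `(S₁)` : `μα[β]μα'[c]s → μα ([c]s)[β/α']`. -/
def muRen (b c : ℕ) (s : LM) : LM :=
  mu (match c with | 0 => b | j+1 => j)
    (s.renM (fun i => match i with | 0 => b | j+1 => j))

/-- The contractum of `(S₃)` : `μα u → λx μα u[x/*α]` where `u = [b]t`. -/
def muEta (b : ℕ) (t : LM) : LM :=
  abs (mu b (if b = 0 then app (star (var 0) 0 (t.renL (· + 1))) (var 0)
             else star (var 0) 0 (t.renL (· + 1))))

/-- The μ-variable of index `k` occurs free (as a name) in the term. -/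
def freeM : ℕ → LM → Prop
  | _, var _ => False
  | k, abs t => freeM k t
  | k, app t u => freeM k t ∨ freeM k u
  | k, mu b t => b = k + 1 ∨ freeM (k+1) t

/-- The λ-variable of index `k` occurs free in the term. -/
def freeL : ℕ → LM → Prop
  | k, var i => i = k
  | k, abs t => freeL (k+1) t
  | k, app t u => freeL k t ∨ freeL k u
  | k, mu _ t => freeL k t

/-- The term contains a subterm of the form `[α]λy w`, where `α` is the
μ-variable of index `k` in the context of the term. -/
def containsNL : ℕ → LM → Prop
  | _, var _ => False
  | k, abs t => containsNL k t
  | k, app t u => containsNL k t ∨ containsNL k u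
  | k, mu b t => (b = k + 1 ∧ ∃ w, t = abs w) ∨ containsNL (k+1) t

/-- One step of λμ-reduction : the computation rules `(C₁)`, `(C₂)` and the
simplification rules `(S₁)`, `(S₂)`, `(S₃)`, anywhere in the term. -/
inductive Step : LM → LM → Prop
  | c1 (u v : LM) : Step (app (abs u) v) (u.subst0 v)
  | c2 (b : ℕ) (t v : LM) : Step (app (mu b t) v) (muApp b t v)
  | s1 (b c : ℕ) (s : LM) : Step (mu b (mu c s)) (muRen b c s)
  | s2 (u : LM) : ¬ freeM 0 u → Step (mu 0 u) (u.renM (· - 1))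
  | s3 (b : ℕ) (t : LM) :
      ((b = 0 ∧ ∃ w, t = abs w) ∨ containsNL 0 t) → Step (mu b t) (muEta b t)
  | appL {t t'} (v) : Step t t' → Step (app t v) (app t' v)
  | appR (t) {v v'} : Step v v' → Step (app t v) (app t v')
  | abs {t t'} : Step t t' → Step (abs t) (abs t')
  | mu (b) {t t'} : Step t t' → Step (mu b t) (mu b t')

/-- Many-step λμ-reduction. -/
def Red : LM → LM → Prop := Relation.ReflTransGen Step

def IsAbsOrMu : LM → Prop
  | abs _ => True
  | mu _ _ => True
  | _ => False

/-- One step of head reduction in the λμ-calculus. -/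
inductive HStep : LM → LM → Prop
  | c1 (u v : LM) : HStep (app (abs u) v) (u.subst0 v)
  | c2 (b : ℕ) (t v : LM) : HStep (app (mu b t) v) (muApp b t v)
  | s1 (b c : ℕ) (s : LM) : HStep (mu b (mu c s)) (muRen b c s)
  | s2 (u : LM) : ¬ freeM 0 u → HStep (mu 0 u) (u.renM (· - 1))
  | s3 (b : ℕ) (t : LM) :
      ((b = 0 ∧ ∃ w, t = abs w) ∨ containsNL 0 t) → HStep (mu b t) (muEta b t)
  | appL {t t'} (v) : ¬ t.IsAbsOrMu → HStep t t' → HStep (app t v) (app t' v)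
  | abs {t t'} : HStep t t' → HStep (abs t) (abs t')
  | mu (b) {t t'} : HStep t t' → HStep (mu b t) (mu b t')

/-- Head λμ-reduction. -/
def HRed : LM → LM → Prop := Relation.ReflTransGen HStep

/-- `u ∼μ v` : `u` and `v` have a common reduct by head reduction. -/
def SimMu (u v : LM) : Prop := ∃ w, HRed u w ∧ HRed v w

/-- One step of β-reduction (rule `(C₁)` anywhere in the term). -/
inductive Beta : LM → LM → Prop
  | c1 (u v : LM) : Beta (app (abs u) v) (u.subst0 v)
  | appL {t t'} (v) : Beta t t' → Beta (app t v) (app t' v)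
  | appR (t) {v v'} : Beta v v' → Beta (app t v) (app t v')
  | abs {t t'} : Beta t t' → Beta (abs t) (abs t')
  | mu (b) {t t'} : Beta t t' → Beta (mu b t) (mu b t')

/-- β-equivalence. -/
def BetaEq : LM → LM → Prop := Relation.EqvGen Beta

/-- Normal λμ-terms. -/
def NormalLM (t : LM) : Prop := ∀ u, ¬ Step t u

/-- Closed λμ-terms : no free λ-variable and no free μ-variable. -/
def ClosedLM (t : LM) : Prop := (∀ k, ¬ freeL k t) ∧ (∀ k, ¬ freeM k t)

/-- The term contains no μ-construction (it is a λ-term). -/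
def MuFree : LM → Prop
  | var _ => True
  | abs t => MuFree t
  | app t u => MuFree t ∧ MuFree u
  | mu _ _ => False

def iterApp (f : LM) : ℕ → LM → LM
  | 0, x => x
  | n+1, x => app f (iterApp f n x)

/-- The Church integer `n̲ = λxλf(f)ⁿx` as a λμ-term. -/
def church (n : ℕ) : LM := abs (abs (iterApp (var 0) n (var 1)))

end LM

/-- Parigot's second order classical type system FD2 for the λμ-calculus :
`FD2 S E Γ t A Δ` means `Γ ⊢_{FD2} t : A, Δ`, where `Γ` is the context of
the λ-variables and `Δ` the context of the μ-variables. Its rules are those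
of AF2 together with the naming rule (9). -/
inductive FD2 (S : Sig) (E : Set (FOTerm S × FOTerm S)) :
    List (Form S) → LM → Form S → List (Form S) → Prop
  | var {Γ : List (Form S)} {i : ℕ} {A : Form S} {Δ : List (Form S)} :
      Γ[i]? = some A → FD2 S E Γ (.var i) A Δ
  | absI {Γ : List (Form S)} {A B : Form S} {t : LM} {Δ : List (Form S)} :
      FD2 S E (A :: Γ) t B Δ → FD2 S E Γ (.abs t) (.arr A B) Δ
  | appE {Γ : List (Form S)} {A B : Form S} {u v : LM} {Δ : List (Form S)} :
      FD2 S E Γ u (.arr A B) Δ → FD2 S E Γ v A Δ → FD2 S E Γ (.app u v) B Δ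
  | fallI {Γ : List (Form S)} {t : LM} {A : Form S} {Δ : List (Form S)} :
      FD2 S E (Γ.map Form.shiftFO) t A (Δ.map Form.shiftFO) →
      FD2 S E Γ t (.fall A) Δ
  | fallE {Γ : List (Form S)} {t : LM} {A : Form S} {Δ : List (Form S)} (u : FOTerm S) :
      FD2 S E Γ t (.fall A) Δ → FD2 S E Γ t (A.substFO0 u) Δ
  | pallI {Γ : List (Form S)} {t : LM} {A : Form S} {Δ : List (Form S)} :
      FD2 S E (Γ.map (Form.rename2 (· + 1))) t A (Δ.map (Form.rename2 (· + 1))) →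
      FD2 S E Γ t (.pall A) Δ
  | pallE {Γ : List (Form S)} {t : LM} {A : Form S} {Δ : List (Form S)} (G : Form S) :
      FD2 S E Γ t (.pall A) Δ → FD2 S E Γ t (A.inst2_0 G) Δ
  | eqE {Γ : List (Form S)} {t : LM} {A : Form S} {u v : FOTerm S} {Δ : List (Form S)} :
      FD2 S E Γ t (A.substFO0 u) Δ → EqE E u v → FD2 S E Γ t (A.substFO0 v) Δ
  | muR {Γ : List (Form S)} {t : LM} {A B : Form S} {Δ : List (Form S)} {a : ℕ} :
      FD2 S E Γ t A (B :: Δ) → (B :: Δ)[a]? = some A →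
      FD2 S E Γ (.mu a t) B Δ

/-- The AF2 type system over (μ-free) λμ-terms. -/
inductive AF2LM (S : Sig) (E : Set (FOTerm S × FOTerm S)) :
    List (Form S) → LM → Form S → Prop
  | var {Γ : List (Form S)} {i : ℕ} {A : Form S} :
      Γ[i]? = some A → AF2LM S E Γ (.var i) A
  | absI {Γ : List (Form S)} {A B : Form S} {t : LM} :
      AF2LM S E (A :: Γ) t B → AF2LM S E Γ (.abs t) (.arr A B)
  | appE {Γ : List (Form S)} {A B : Form S} {u v : LM} :
      AF2LM S E Γ u (.arr A B) → AF2LM S E Γ v A → AF2LM S E Γ (.app u v) B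
  | fallI {Γ : List (Form S)} {t : LM} {A : Form S} :
      AF2LM S E (Γ.map Form.shiftFO) t A → AF2LM S E Γ t (.fall A)
  | fallE {Γ : List (Form S)} {t : LM} {A : Form S} (u : FOTerm S) :
      AF2LM S E Γ t (.fall A) → AF2LM S E Γ t (A.substFO0 u)
  | pallI {Γ : List (Form S)} {t : LM} {A : Form S} :
      AF2LM S E (Γ.map (Form.rename2 (· + 1))) t A → AF2LM S E Γ t (.pall A)
  | pallE {Γ : List (Form S)} {t : LM} {A : Form S} (G : Form S) :
      AF2LM S E Γ t (.pall A) → AF2LM S E Γ t (A.inst2_0 G)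
  | eqE {Γ : List (Form S)} {t : LM} {A : Form S} {u v : FOTerm S} :
      AF2LM S E Γ t (A.substFO0 u) → EqE E u v → AF2LM S E Γ t (A.substFO0 v)

namespace LMX
open LM

/-- Simultaneous renaming of λ- and μ-variables. -/
def ren : (ℕ → ℕ) → (ℕ → ℕ) → LM → LM
  | ρ, _, .var i => .var (ρ i)
  | ρ, δ, .abs t => .abs (ren (liftρ ρ) δ t)
  | ρ, δ, .app t u => .app (ren ρ δ t) (ren ρ δ u)
  | ρ, δ, .mu b t => .mu (liftρ δ b) (ren ρ (liftρ δ) t)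

def appL (t : LM) (ws : List LM) : LM := ws.foldl LM.app t

@[simp] theorem appL_nil (t : LM) : appL t [] = t := rfl
@[simp] theorem appL_cons (t v : LM) (ws : List LM) : appL t (v :: ws) = appL (.app t v) ws := rfl
theorem appL_append (t : LM) (ws vs : List LM) : appL t (ws ++ vs) = appL (appL t ws) vs := by
  simp [appL]

def upL (σ : ℕ → LM) : ℕ → LM
  | 0 => .var 0
  | j+1 => ren (· + 1) id (σ j)

def upM (σ : ℕ → LM) : ℕ → LM := fun i => ren id (· + 1) (σ i)

def rk (ρ δ : ℕ → ℕ) (κ : ℕ → ℕ × List LM) : ℕ → ℕ × List LM :=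
  fun j => (δ (κ j).1, (κ j).2.map (ren ρ δ))

def kM (κ : ℕ → ℕ × List LM) : ℕ → ℕ × List LM
  | 0 => (0, [])
  | j+1 => rk id (· + 1) κ j

/-- Simultaneous instantiation: each λ-variable `i` is replaced by `σ i`, each named
term `[j]w` by `[j'](w)π` where `κ j = (j', π)`. -/
def inst : (ℕ → LM) → (ℕ → ℕ × List LM) → LM → LM
  | σ, _, .var i => σ i
  | σ, κ, .abs t => .abs (inst (upL σ) (rk (· + 1) id κ) t)
  | σ, κ, .app t u => .app (inst σ κ t) (inst σ κ u)
  | σ, κ, .mu b t => .mu (kM κ b).1 (appL (inst (upM σ) (kM κ) t) (kM κ b).2)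

def kid : ℕ → ℕ × List LM := fun j => (j, [])

theorem liftρ_id : liftρ id = id := by funext i; cases i <;> rfl
theorem liftρ_id2 : liftρ (fun i => i) = id := by funext i; cases i <;> rfl
theorem liftρ_comp (ρ' ρ : ℕ → ℕ) : liftρ ρ' ∘ liftρ ρ = liftρ (ρ' ∘ ρ) := by
  funext i; cases i <;> rfl

theorem renL_eq (t : LM) : ∀ ρ, t.renL ρ = ren ρ id t := by
  induction t with
  | var i => intro ρ; rfl
  | abs t ih => intro ρ; simp [LM.renL, ren, ih]
  | app t u ih1 ih2 => intro ρ; simp [LM.renL, ren, ih1, ih2]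
  | mu b t ih => intro ρ; simp [LM.renL, ren, ih, liftρ_id]

theorem renM_eq (t : LM) : ∀ δ, t.renM δ = ren id δ t := by
  induction t with
  | var i => intro ρ; rfl
  | abs t ih => intro ρ; simp [LM.renM, ren, ih, liftρ_id]
  | app t u ih1 ih2 => intro ρ; simp [LM.renM, ren, ih1, ih2]
  | mu b t ih => intro ρ; simp [LM.renM, ren, ih]

theorem ren_ren (t : LM) : ∀ ρ δ ρ' δ', ren ρ' δ' (ren ρ δ t) = ren (ρ' ∘ ρ) (δ' ∘ δ) t := by
  induction t with
  | var i => intros; rfl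
  | abs t ih => intros; simp [ren, ih, liftρ_comp]
  | app t u ih1 ih2 => intros; simp [ren, ih1, ih2]
  | mu b t ih =>
    intro ρ δ ρ' δ'
    simp only [ren, ih, liftρ_comp]
    rw [← liftρ_comp]; rfl

theorem ren_id (t : LM) : ren id id t = t := by
  induction t with
  | var i => rfl
  | abs t ih => simp [ren, liftρ_id, ih]
  | app t u ih1 ih2 => simp [ren, ih1, ih2]
  | mu b t ih => simp [ren, liftρ_id, ih]

theorem ren_appL (ρ δ) (ws : List LM) : ∀ t, ren ρ δ (appL t ws) = appL (ren ρ δ t) (ws.map (ren ρ δ)) := by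
  induction ws with
  | nil => intro t; rfl
  | cons v ws ih => intro t; simp [ih, ren]

theorem inst_appL (σ κ) (ws : List LM) : ∀ t, inst σ κ (appL t ws) = appL (inst σ κ t) (ws.map (inst σ κ)) := by
  induction ws with
  | nil => intro t; rfl
  | cons v ws ih => intro t; simp [ih, inst]

theorem kM_ren (κ : ℕ → ℕ × List LM) (δ : ℕ → ℕ) :
    (fun j => kM κ (liftρ δ j)) = kM (fun j => κ (δ j)) := by
  funext j; cases j <;> rfl

theorem upL_ren (σ : ℕ → LM) (ρ : ℕ → ℕ) :
    (fun j => upL σ (liftρ ρ j)) = upL (fun j => σ (ρ j)) := by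
  funext j; cases j <;> rfl

theorem inst_ren (t : LM) : ∀ σ κ ρ δ, inst σ κ (ren ρ δ t)
    = inst (fun i => σ (ρ i)) (fun j => κ (δ j)) t := by
  induction t with
  | var i => intros; rfl
  | abs t ih =>
    intro σ κ ρ δ
    simp only [ren, inst, ih, upL_ren]; rfl
  | app t u ih1 ih2 => intros; simp [ren, inst, ih1, ih2]
  | mu b t ih =>
    intro σ κ ρ δ
    simp only [ren, inst, ih, kM_ren]
    rw [← kM_ren κ δ]; rfl

theorem rk_rk (ρ δ ρ' δ') (κ : ℕ → ℕ × List LM) : rk ρ' δ' (rk ρ δ κ) = rk (ρ' ∘ ρ) (δ' ∘ δ) κ := by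
  funext j; simp [rk, ren_ren]

theorem ren_inst (t : LM) : ∀ σ κ ρ δ, ren ρ δ (inst σ κ t)
    = inst (fun i => ren ρ δ (σ i)) (rk ρ δ κ) t := by
  induction t with
  | var i => intros; rfl
  | abs t ih =>
    intro σ κ ρ δ
    simp only [ren, inst, ih, rk_rk]
    congr 2
    funext i
    cases i with
    | zero => rfl
    | succ i => simp only [upL, ren_ren]; rfl
  | app t u ih1 ih2 => intros; simp [ren, inst, ih1, ih2]
  | mu b t ih =>
    intro σ κ ρ δ
    have hk : rk ρ (liftρ δ) (kM κ) = kM (rk ρ δ κ) := by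
      funext j
      cases j with
      | zero => rfl
      | succ j =>
        have := congrFun (rk_rk id (· + 1) ρ (liftρ δ) κ) j
        have h2 := congrFun (rk_rk ρ δ id (· + 1) κ) j
        simp only [kM]
        rw [h2]
        exact this
    simp only [ren, inst, ih, ren_appL]
    rw [← hk]
    have hs : (fun i => ren ρ (liftρ δ) (upM σ i)) = upM fun i => ren ρ δ (σ i) := by
      funext i; simp only [upM, ren_ren]; rfl
    rw [hs]; rfl

def ck (σ' : ℕ → LM) (κ' κ : ℕ → ℕ × List LM) : ℕ → ℕ × List LM :=
  fun j => ((κ' (κ j).1).1, (κ j).2.map (inst σ' κ') ++ (κ' (κ j).1).2)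

theorem inst_upL (σ' κ' ) (s : LM) : inst (upL σ') (rk (· + 1) id κ') (ren (· + 1) id s)
    = ren (· + 1) id (inst σ' κ' s) := by
  rw [inst_ren, ren_inst]; rfl

theorem inst_upM (σ' κ' ) (s : LM) : inst (upM σ') (kM κ') (ren id (· + 1) s)
    = ren id (· + 1) (inst σ' κ' s) := by
  rw [inst_ren, ren_inst]; rfl

theorem inst_inst (t : LM) : ∀ σ κ σ' κ', inst σ' κ' (inst σ κ t)
    = inst (fun i => inst σ' κ' (σ i)) (ck σ' κ' κ) t := by
  induction t with
  | var i => intros; rfl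
  | abs t ih =>
    intro σ κ σ' κ'
    simp only [inst, ih]
    congr 2
    · funext i
      cases i with
      | zero => rfl
      | succ i => exact inst_upL _ _ _
    · funext j
      simp only [ck, rk, List.map_map, List.map_append, Prod.mk.injEq, true_and, id]
      congr 1
      apply List.map_congr_left
      intro s _
      exact inst_upL _ _ _
  | app t u ih1 ih2 => intros; simp [inst, ih1, ih2]
  | mu b t ih =>
    intro σ κ σ' κ'
    have hk : ck (upM σ') (kM κ') (kM κ) = kM (ck σ' κ' κ) := by
      funext j
      cases j with
      | zero => rfl
      | succ j =>
        simp only [ck, kM, rk, List.map_map, List.map_append, Prod.mk.injEq, true_and]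
        congr 1
        apply List.map_congr_left
        intro s _
        exact inst_upM _ _ _
    simp only [inst, ih, inst_appL, ← appL_append]
    rw [← hk]
    have hs : (fun i => inst (upM σ') (kM κ') (upM σ i)) = upM fun i => inst σ' κ' (σ i) := by
      funext i; exact inst_upM _ _ _
    rw [hs]; rfl

theorem rk_kid (ρ : ℕ → ℕ) : rk ρ id kid = kid := rfl
theorem kM_kid : kM kid = kid := by funext j; cases j <;> rfl
theorem kM_kren (δ : ℕ → ℕ) : kM (fun j => (δ j, [])) = fun j => (liftρ δ j, []) := by
  funext j; cases j <;> rfl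

theorem upL_var (ρ : ℕ → ℕ) : upL (fun i => .var (ρ i)) = fun i => .var (liftρ ρ i) := by
  funext j; cases j <;> rfl

theorem inst_var (t : LM) : ∀ ρ δ, inst (fun i => .var (ρ i)) (fun j => (δ j, [])) t = ren ρ δ t := by
  induction t with
  | var i => intros; rfl
  | abs t ih =>
    intro ρ δ
    simp only [inst, ren, upL_var, ← ih]; rfl
  | app t u ih1 ih2 => intros; simp [ren, inst, ih1, ih2]
  | mu b t ih =>
    intro ρ δ
    simp only [inst, ren, kM_kren, ← ih]; rfl

theorem inst_id (t : LM) : inst LM.var kid t = t := by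
  have := inst_var t id id
  rw [ren_id] at this
  exact this

theorem substL_eq (t : LM) : ∀ σ, t.substL σ = inst σ kid t := by
  induction t with
  | var i => intros; rfl
  | abs t ih =>
    intro σ
    simp only [LM.substL, inst, ih, rk_kid]
    congr 2
    funext i; cases i with
    | zero => rfl
    | succ i => simp [upL, renL_eq]
  | app t u ih1 ih2 => intros; simp [LM.substL, inst, ih1, ih2]
  | mu b t ih =>
    intro σ
    simp only [LM.substL, inst, ih, kM_kid, renM_eq]; rfl

def kst (v : LM) (k : ℕ) : ℕ → ℕ × List LM := fun j => if j = k then (j, [v]) else (j, [])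

theorem star_eq (t : LM) : ∀ v k, LM.star v k t = inst LM.var (kst v k) t := by
  induction t with
  | var i => intros; rfl
  | abs t ih =>
    intro v k
    simp only [LM.star, inst, ih, renL_eq]
    congr 2
    · funext i; cases i <;> rfl
    · funext j; simp only [kst, rk]; split <;> rfl
  | app t u ih1 ih2 => intros; simp [LM.star, inst, ih1, ih2]
  | mu b t ih =>
    intro v k
    have hk : kM (kst v k) = kst (ren id (· + 1) v) (k+1) := by
      funext j
      cases j with
      | zero => simp [kM, kst]
      | succ j => simp only [kst, kM, rk, Nat.add_right_cancel_iff]; split <;> rfl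
    simp only [LM.star, inst, ih, renM_eq, hk]
    have hs : upM LM.var = LM.var := rfl
    rw [hs]
    simp only [kst]
    split <;> rfl

/-- `v :: σ` -/
def scons {α : Type} (v : α) (σ : ℕ → α) : ℕ → α
  | 0 => v
  | j+1 => σ j

theorem subst0_eq (u v : LM) : u.subst0 v = inst (scons v LM.var) kid u := by
  rw [LM.subst0, substL_eq]; rfl

theorem subst0_inst (u v : LM) (σ κ) :
    (inst (upL σ) (rk (· + 1) id κ) u).subst0 v = inst (scons v σ) κ u := by
  rw [subst0_eq, inst_inst]
  have key : ∀ s, inst (scons v LM.var) kid (ren (· + 1) id s) = s := by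
    intro s; rw [inst_ren]; exact inst_id s
  congr 1
  · funext i; cases i with
    | zero => rfl
    | succ i => exact key _
  · funext j
    simp only [ck, rk, kid, List.map_map, List.append_nil, id]
    have : (inst (scons v LM.var) kid ∘ ren (· + 1) id) = id := by
      funext s; exact key s
    rw [this]; simp

theorem inst_subst0 (u v : LM) (σ κ) :
    inst σ κ (u.subst0 v) = (inst (upL σ) (rk (· + 1) id κ) u).subst0 (inst σ κ v) := by
  rw [subst0_inst, subst0_eq, inst_inst]
  congr 1
  funext i; cases i <;> rfl

theorem ren_subst0 (u v : LM) (ρ δ) :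
    ren ρ δ (u.subst0 v) = (ren (liftρ ρ) δ u).subst0 (ren ρ δ v) := by
  rw [← inst_var, inst_subst0, upL_var]
  simp only [inst_var]
  congr 1
  exact inst_var _ _ _

end LMX
namespace LMX
open LM

/-- Weak head β-reduction. -/
inductive WH : LM → LM → Prop
  | beta (u v : LM) : WH (.app (.abs u) v) (u.subst0 v)
  | appL {t t' : LM} (v : LM) : WH t t' → WH (.app t v) (.app t' v)

def kpi (π : List LM) : ℕ → ℕ × List LM
  | 0 => (0, π)
  | j+1 => (j, [])

def ksp (π : List LM) : ℕ → ℕ × List LM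
  | 0 => (0, π.map (ren id (· + 1)))
  | j+1 => (j+1, [])

/-- The abstract machine. -/
inductive Mach : LM → LM → Prop
  | wh {t t' : LM} : WH t t' → Mach t t'
  | mu (b : ℕ) (t : LM) (π : List LM) : (kpi π b).1 = 0 →
      Mach (appL (.mu b t) π) (appL (inst LM.var (kpi π) t) (kpi π b).2)

def MC (t : LM) : Prop := ∀ δ, ren id δ t = t

theorem MC_app {t u : LM} : MC (.app t u) ↔ MC t ∧ MC u := by
  constructor
  · intro h
    refine ⟨fun δ => ?_, fun δ => ?_⟩ <;> have := h δ <;> simp only [ren, LM.app.injEq] at this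
    · exact this.1
    · exact this.2
  · rintro ⟨h1, h2⟩ δ
    simp [ren, h1 δ, h2 δ]

theorem MC_appL (π : List LM) : ∀ {t : LM}, MC (appL t π) ↔ MC t ∧ ∀ v ∈ π, MC v := by
  induction π with
  | nil => intro t; simp
  | cons v π ih => intro t; simp [ih, MC_app, and_assoc]

theorem WH_MC {t t' : LM} (h : WH t t') : MC t → MC t' := by
  induction h with
  | beta u v =>
    intro h δ
    have := h δ
    simp only [ren, LM.app.injEq, LM.abs.injEq, liftρ_id] at this
    rw [ren_subst0, liftρ_id, this.1, this.2]
  | appL v _ ih =>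
    intro h
    rw [MC_app] at h ⊢
    exact ⟨ih h.1, h.2⟩

theorem WH_HStep {t t' : LM} (h : WH t t') : HStep t t' := by
  induction h with
  | beta u v => exact .c1 u v
  | appL v h ih =>
    refine .appL v ?_ ih
    cases h <;> exact id

theorem HStep_appL (π : List LM) : ∀ {x y z : LM}, HStep (.app x y) z →
    HStep (appL (.app x y) π) (appL z π) := by
  induction π with
  | nil => intro x y z h; exact h
  | cons v π ih =>
    intro x y z h
    exact ih (.appL v (fun h => h) h)

theorem muApp_eq (b : ℕ) (t v : LM) :
    muApp b t v = .mu b (appL (inst LM.var (ksp [v]) t) (ksp [v] b).2) := by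
  have hk : kst (ren id (· + 1) v) 0 = ksp [v] := by
    funext j; cases j <;> rfl
  simp only [muApp, star_eq, renM_eq, hk]
  cases b <;> rfl

theorem ck_ksp (v : LM) (π : List LM) : ck LM.var (ksp π) (ksp [v]) = ksp (v :: π) := by
  funext j
  cases j with
  | zero =>
    simp only [ck, ksp, List.map_cons, List.map_nil, inst_ren]
    have := inst_var v id (· + 1)
    simp only [id] at this
    simp [← this]
  | succ j => rfl

theorem HRed_mu (π : List LM) : ∀ (b : ℕ) (t : LM),
    HRed (appL (.mu b t) π) (.mu b (appL (inst LM.var (ksp π) t) (ksp π b).2)) := by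
  induction π with
  | nil =>
    intro b t
    have hk : ksp [] = kid := by funext j; cases j <;> rfl
    rw [hk, inst_id]; exact .refl
  | cons v π ih =>
    intro b t
    refine .head (HStep_appL π (.c2 b t v)) ?_
    rw [muApp_eq]
    convert ih b (appL (inst LM.var (ksp [v]) t) (ksp [v] b).2) using 1
    rw [inst_appL, inst_inst, ← appL_append]
    have h := ck_ksp v π
    have h2 := congrArg Prod.snd (congrFun h b)
    have h3 : (ksp [v] b).1 = b := by cases b <;> rfl
    simp only [ck, h3] at h2
    rw [h2, h]
    rfl

theorem HRed_mu_congr (b : ℕ) {t t' : LM} (h : HRed t t') : HRed (.mu b t) (.mu b t') := by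
  induction h with
  | refl => exact .refl
  | tail _ h ih => exact .tail ih (.mu b h)

def r0 : ℕ → ℕ
  | 0 => 0
  | j+1 => j

theorem muRen_eq (b : ℕ) (s : LM) : muRen 0 b s = .mu (r0 b) (ren id r0 s) := by
  cases b <;> simp only [muRen, renM_eq] <;> rfl

theorem Mach_HRed {t t' : LM} (h : Mach t t') : HRed (.mu 0 t) (.mu 0 t') := by
  cases h with
  | wh h => exact .single (.mu 0 (WH_HStep h))
  | mu b t π hb =>
    refine Relation.ReflTransGen.trans (HRed_mu_congr 0 (HRed_mu π b t)) ?_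
    refine .head (.s1 _ _ _) ?_
    have key : ∀ s : LM, ren id r0 (ren id (· + 1) s) = s := by
      intro s; rw [ren_ren]; exact ren_id s
    have e2 : rk id r0 (ksp π) = kpi π := by
      funext j
      cases j with
      | zero =>
        simp only [rk, ksp, kpi, List.map_map]
        congr 1
        have : (ren id r0 ∘ ren id (· + 1)) = id := by
          funext s; exact key s
        rw [this]; simp
      | succ j => rfl
    have : muRen 0 b (appL (inst LM.var (ksp π) t) (ksp π b).2)
      = .mu 0 (appL (inst LM.var (kpi π) t) (kpi π b).2) := by
      simp only [muRen_eq, ren_appL, ren_inst]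
      rw [e2]
      have h1 := congrArg Prod.snd (congrFun e2 b)
      simp only [rk] at h1
      rw [h1]
      have h2 : r0 b = 0 := by
        cases b with
        | zero => rfl
        | succ j => exact hb
      rw [h2]; rfl
    rw [this]

theorem sim {U V : LM} (h : Relation.ReflTransGen Mach U V) (hU : MC U) :
    (HRed U V ∧ MC V) ∨ HRed U (.mu 0 V) := by
  induction h with
  | refl => exact .inl ⟨.refl, hU⟩
  | @tail V V' _ h ih =>
    rcases ih with ⟨ih, hV⟩ | ih
    · cases h with
      | wh h => exact .inl ⟨ih.tail (WH_HStep h), WH_MC h hV⟩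
      | mu b t π hb =>
        right
        refine Relation.ReflTransGen.trans ih ?_
        have h1 := HRed_mu π b t
        rw [MC_appL] at hV
        obtain ⟨ht, hπ⟩ := hV
        have hs := ht (· + 1)
        simp only [ren, LM.mu.injEq] at hs
        have hb0 : b = 0 := by
          cases b with
          | zero => rfl
          | succ j => simp [liftρ] at hs
        subst hb0
        have hm : π.map (ren id (· + 1)) = π := by
          conv_rhs => rw [← List.map_id π]
          apply List.map_congr_left
          intro v hv; exact hπ v hv _
        have e1 : inst LM.var (kpi π) t = inst LM.var (ksp π) t := by
          conv_lhs => rw [← hs.2]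
          rw [inst_ren]
          congr 1
          funext j
          cases j with
          | zero => simp [kpi, ksp, liftρ, hm]
          | succ j => rfl
        simp only [ksp, hm] at h1
        rw [e1]
        exact h1
    · exact .inr (Relation.ReflTransGen.trans ih (Mach_HRed h))

theorem freeM_ren (t : LM) : ∀ ρ δ k, (∀ j, δ j ≠ k) → ¬ freeM k (ren ρ δ t) := by
  induction t with
  | var i => intro ρ δ k _ h; exact h
  | abs t ih => intro ρ δ k hk h; exact ih _ _ _ hk h
  | app t u ih1 ih2 =>
    intro ρ δ k hk h
    rcases h with h | h
    · exact ih1 _ _ _ hk h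
    · exact ih2 _ _ _ hk h
  | mu b t ih =>
    intro ρ δ k hk h
    have hl : ∀ j, liftρ δ j ≠ k + 1 := by
      intro j
      cases j with
      | zero => simp [liftρ]
      | succ j => simpa [liftρ] using hk j
    rcases h with h | h
    · exact hl _ h
    · exact ih _ _ _ hl h

theorem MC_freeM {t : LM} (h : MC t) : ¬ freeM 0 t := by
  rw [← h (· + 1)]
  exact freeM_ren _ _ _ _ (by simp)

theorem ren_congr (t : LM) : ∀ ρ δ δ', (∀ k, freeM k t → δ k = δ' k) → ren ρ δ t = ren ρ δ' t := by
  induction t with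
  | var i => intros; rfl
  | abs t ih => intro ρ δ δ' h; simp only [ren]; rw [ih _ _ _ h]
  | app t u ih1 ih2 =>
    intro ρ δ δ' h
    simp only [ren]
    rw [ih1 _ _ _ (fun k hk => h k (.inl hk)), ih2 _ _ _ (fun k hk => h k (.inr hk))]
  | mu b t ih =>
    intro ρ δ δ' h
    simp only [ren]
    rw [ih _ (liftρ δ) (liftρ δ')]
    · congr 1
      cases b with
      | zero => rfl
      | succ j => simp only [liftρ]; rw [h j (.inl rfl)]
    · intro k hk
      cases k with
      | zero => rfl
      | succ k => simp only [liftρ]; rw [h k (.inr hk)]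

theorem MC_of_freeM {t : LM} (h : ∀ k, ¬ freeM k t) : MC t := by
  intro δ
  rw [ren_congr t id δ id (fun k hk => absurd hk (h k)), ren_id]

theorem simMu_of {U X : LM} (hU : MC U) (h : Relation.ReflTransGen Mach U (.app (.var 0) X)) :
    SimMu U (.mu 0 (.app (.var 0) X)) := by
  rcases sim h hU with ⟨h, hV⟩ | h
  · refine ⟨_, h, .single ?_⟩
    have := HStep.s2 _ (MC_freeM hV)
    rwa [renM_eq, hV] at this
  · exact ⟨_, h, .refl⟩

theorem WH_appL (π : List LM) : ∀ {x y : LM}, WH x y → WH (appL x π) (appL y π) := by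
  induction π with
  | nil => intro x y h; exact h
  | cons v π ih => intro x y h; exact ih (.appL v h)

end LMX
namespace LMX

/-- Values of the first order terms of arithmetic. -/
def ev (e : ℕ → ℕ) : FOTerm NatSig → ℕ
  | .var i => e i
  | .fn NatFn.zero _ => 0
  | .fn NatFn.succ ts => ev e (ts (0 : Fin 1)) + 1

theorem ev_subst (σ : ℕ → FOTerm NatSig) (e : ℕ → ℕ) (t : FOTerm NatSig) :
    ev e (t.subst σ) = ev (fun i => ev e (σ i)) t := by
  induction t with
  | var i => rfl
  | fn f ts ih =>
    cases f with
    | zero => rfl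
    | succ => exact congrArg (· + 1) (ih _)

theorem ev_rename (ρ : ℕ → ℕ) (e : ℕ → ℕ) (t : FOTerm NatSig) :
    ev e (t.rename ρ) = ev (fun i => e (ρ i)) t := by
  induction t with
  | var i => rfl
  | fn f ts ih =>
    cases f with
    | zero => rfl
    | succ => exact congrArg (· + 1) (ih _)

theorem ev_numT (e : ℕ → ℕ) (n : ℕ) : ev e (numT n) = n := by
  induction n with
  | zero => rfl
  | succ n ih => simp only [numT, succT, ev]; rw [ih]

theorem subst_num (e : ℕ → ℕ) (t : FOTerm NatSig) :
    t.subst (fun i => numT (e i)) = numT (ev e t) := by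
  induction t with
  | var i => rfl
  | fn f ts ih =>
    cases f with
    | zero =>
      simp only [FOTerm.subst, ev, numT, zeroT]
      congr 1
      funext i; exact i.elim0
    | succ =>
      simp only [FOTerm.subst, ev, numT, succT]
      congr 1
      funext i
      have : i = (0 : Fin 1) := Subsingleton.elim (α := Fin 1) _ _
      subst this
      exact ih _

theorem fo_subst_subst (σ τ : ℕ → FOTerm NatSig) (t : FOTerm NatSig) :
    (t.subst σ).subst τ = t.subst (fun i => (σ i).subst τ) := by
  induction t with
  | var i => rfl
  | fn f ts ih => simp only [FOTerm.subst, ih]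

theorem EqE_subst {E : Set (FOTerm NatSig × FOTerm NatSig)} {u v : FOTerm NatSig}
    (h : EqE E u v) (τ : ℕ → FOTerm NatSig) : EqE E (u.subst τ) (v.subst τ) := by
  induction h with
  | rel u v h =>
    obtain ⟨p, hp, σ, rfl, rfl⟩ := h
    exact .rel _ _ ⟨p, hp, _, fo_subst_subst _ _ _, fo_subst_subst _ _ _⟩
  | refl => exact .refl _
  | symm _ _ _ ih => exact .symm _ _ ih
  | trans _ _ _ _ _ ih1 ih2 => exact .trans _ _ _ ih1 ih2

theorem EqE_num {E : Set (FOTerm NatSig × FOTerm NatSig)} (hE : Adequate E) :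
    ∀ k l, EqE E (numT k) (numT l) → k = l := by
  intro k
  induction k with
  | zero =>
    intro l h
    cases l with
    | zero => rfl
    | succ l => exact absurd (Relation.EqvGen.symm _ _ h) (hE.1 _)
  | succ k ih =>
    intro l h
    cases l with
    | zero => exact absurd h (hE.1 _)
    | succ l => rw [ih l (hE.2 _ _ h)]

theorem EqE_ev {E : Set (FOTerm NatSig × FOTerm NatSig)} (hE : Adequate E) {u v : FOTerm NatSig}
    (h : EqE E u v) (e : ℕ → ℕ) : ev e u = ev e v := by
  have := EqE_subst h (fun i => numT (e i))
  rw [subst_num, subst_num] at this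
  exact EqE_num hE _ _ this

/-- An abstract structure of truth values. -/
structure TV (V : Type) where
  bot : V
  arr : V → V → V
  inf : Set V → V

variable {V : Type} (M : TV V)

/-- Interpretation of formulas. -/
def interp : (ℕ → ℕ) → (ℕ → List ℕ → V) → Form NatSig → V
  | _, _, .bot => M.bot
  | _, _, .pr P _ => Empty.elim P
  | e, Φ, .pvar X ts => Φ X (ts.map (ev e))
  | e, Φ, .arr A B => M.arr (interp e Φ A) (interp e Φ B)
  | e, Φ, .fall A => M.inf (Set.range fun k => interp (scons k e) Φ A)
  | e, Φ, .pall A => M.inf (Set.range fun F => interp e (scons F Φ) A)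

theorem interp_substFO (A : Form NatSig) : ∀ (σ : ℕ → FOTerm NatSig) e Φ,
    interp M e Φ (A.substFO σ) = interp M (fun i => ev e (σ i)) Φ A := by
  induction A with
  | bot => intros; rfl
  | pr P ts => exact Empty.elim P
  | pvar X ts =>
    intro σ e Φ
    simp only [Form.substFO, interp, List.map_map]
    congr 2
    funext t; exact ev_subst σ e t
  | arr A B ih1 ih2 => intro σ e Φ; simp only [Form.substFO, interp, ih1, ih2]
  | fall A ih =>
    intro σ e Φ
    simp only [Form.substFO, interp, ih]
    congr 2
    funext k
    congr 1
    funext i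
    cases i with
    | zero => rfl
    | succ i => simp only [FOTerm.liftSub, ev_rename]; rfl
  | pall A ih => intro σ e Φ; simp only [Form.substFO, interp, ih]

theorem interp_rename2 (A : Form NatSig) : ∀ (ρ : ℕ → ℕ) e Φ,
    interp M e Φ (A.rename2 ρ) = interp M e (fun i => Φ (ρ i)) A := by
  induction A with
  | bot => intros; rfl
  | pr P ts => exact Empty.elim P
  | pvar X ts => intros; rfl
  | arr A B ih1 ih2 => intro σ e Φ; simp only [Form.rename2, interp, ih1, ih2]
  | fall A ih => intro σ e Φ; simp only [Form.rename2, interp, ih]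
  | pall A ih =>
    intro σ e Φ
    simp only [Form.rename2, interp, ih]
    congr 2
    funext k
    congr 1
    funext i
    cases i <;> rfl

def eapp (l : List ℕ) (e : ℕ → ℕ) : ℕ → ℕ :=
  fun i => if h : i < l.length then l.get ⟨i, h⟩ else e (i - l.length)

/-- Insert a predicate at position `p`. -/
def ins2 (p : ℕ) (F : List ℕ → V) (Φ : ℕ → List ℕ → V) : ℕ → List ℕ → V :=
  fun X => if X = p then F else Φ (if p < X then X - 1 else X)

theorem interp_inst2 (G : Form NatSig) (A : Form NatSig) : ∀ d p e Φ,
    interp M e Φ (Form.inst2 G d p A) = interp M e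
      (ins2 p (fun l => interp M (eapp l (fun i => e (i + d))) (fun i => Φ (i + p)) G) Φ) A := by
  induction A with
  | bot => intros; rfl
  | pr P ts => exact Empty.elim P
  | pvar X ts =>
    intro d p e Φ
    simp only [Form.inst2]
    by_cases h : X = p
    · simp only [h, if_true, interp, ins2, interp_substFO, interp_rename2]
      congr 1
      funext i
      simp only [eapp, List.length_map]
      split
      · simp
      · rfl
    · simp only [h, if_false, interp, ins2]
  | arr A B ih1 ih2 => intro d p e Φ; simp only [Form.inst2, interp, ih1, ih2]
  | fall A ih =>
    intro d p e Φ
    simp only [Form.inst2, interp, ih]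
    rfl
  | pall A ih =>
    intro d p e Φ
    simp only [Form.inst2, interp, ih]
    congr 2
    funext F
    congr 1
    funext X
    cases X with
    | zero => simp [ins2, scons]
    | succ X =>
      simp only [ins2, Nat.add_right_cancel_iff, scons]
      split
      · rfl
      · simp only [Nat.add_lt_add_iff_right, Nat.add_sub_cancel]
        by_cases hX : p < X
        · simp only [if_pos hX]
          cases X with
          | zero => omega
          | succ X => rfl
        · simp only [if_neg hX]

theorem interp_inst0 (A G : Form NatSig) (e Φ) :
    interp M e Φ (A.inst2_0 G) = interp M e (scons (fun l => interp M (eapp l e) Φ G) Φ) A := by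
  rw [Form.inst2_0, interp_inst2]
  congr 1
  funext X
  cases X <;> simp [ins2, scons]

theorem interp_substFO0 (A : Form NatSig) (u e Φ) :
    interp M e Φ (A.substFO0 u) = interp M (scons (ev e u) e) Φ A := by
  rw [Form.substFO0, interp_substFO]
  congr 1
  funext X
  cases X <;> rfl

theorem interp_shiftFO (A : Form NatSig) (k e Φ) :
    interp M (scons k e) Φ A.shiftFO = interp M e Φ A := by
  rw [Form.shiftFO, interp_substFO]
  rfl

theorem interp_shift2 (A : Form NatSig) (F e Φ) :
    interp M e (scons F Φ) (A.rename2 (· + 1)) = interp M e Φ A := by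
  rw [interp_rename2]
  rfl

end LMX
namespace LMX
open LM

/-- Terms realizing a falsity value. -/
def Real (P : Set LM) (S : Set (List LM)) : Set LM := {t | ∀ π ∈ S, appL t π ∈ P}

def M2 (P : Set LM) : TV (Set (List LM)) where
  bot := ∅
  arr A B := {ws | ∃ v π, ws = v :: π ∧ v ∈ Real P A ∧ π ∈ B}
  inf S := ⋃₀ S

abbrev fals (P : Set LM) (e : ℕ → ℕ) (Φ : ℕ → List ℕ → Set (List LM)) (A : Form NatSig) :
    Set (List LM) := interp (M2 P) e Φ A

theorem fals_fall (P e Φ A) : fals P e Φ (.fall A) = ⋃₀ (Set.range fun k => fals P (scons k e) Φ A) := rfl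
theorem fals_pall (P e Φ A) : fals P e Φ (.pall A)
  = ⋃₀ (Set.range fun F : List ℕ → Set (List LM) => fals P e (scons F Φ) A) := rfl

theorem adequacy2 {E : Set (FOTerm NatSig × FOTerm NatSig)} (hE : Adequate E)
    (P : Set LM) (hP : ∀ t t', Mach t t' → t' ∈ P → t ∈ P)
    {Γ : List (Form NatSig)} {t : LM} {A : Form NatSig} {Δ : List (Form NatSig)}
    (h : FD2 NatSig E Γ t A Δ) :
    ∀ (e : ℕ → ℕ) (Φ : ℕ → List ℕ → Set (List LM)) (σ : ℕ → LM) (κ : ℕ → ℕ × List LM),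
      (∀ i B, Γ[i]? = some B → σ i ∈ Real P (fals P e Φ B)) →
      (∀ j B, Δ[j]? = some B → (κ j).1 = 0 ∧ (κ j).2 ∈ fals P e Φ B) →
      inst σ κ t ∈ Real P (fals P e Φ A) := by
  induction h with
  | var h => intro e Φ σ κ hσ hκ; exact hσ _ _ h
  | @absI Γ A B t Δ _ ih =>
    intro e Φ σ κ hσ hκ
    rintro ws ⟨v, π, rfl, hv, hπ⟩
    simp only [inst, appL_cons]
    refine hP _ _ (.wh (WH_appL π (.beta _ _))) ?_
    rw [subst0_inst]
    refine ih e Φ (scons v σ) κ ?_ hκ π hπ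
    intro i C hi
    cases i with
    | zero => simp at hi; subst hi; exact hv
    | succ i => exact hσ i C (by simpa using hi)
  | appE _ _ ih1 ih2 =>
    intro e Φ σ κ hσ hκ π hπ
    exact ih1 e Φ σ κ hσ hκ (_ :: π) ⟨_, π, rfl, ih2 e Φ σ κ hσ hκ, hπ⟩
  | fallI _ ih =>
    intro e Φ σ κ hσ hκ π hπ
    rw [fals_fall] at hπ
    obtain ⟨_, ⟨k, rfl⟩, hk⟩ := hπ
    refine ih (scons k e) Φ σ κ ?_ ?_ π hk
    · intro i B hi
      simp only [List.getElem?_map, Option.map_eq_some_iff] at hi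
      obtain ⟨C, hC, rfl⟩ := hi
      rw [fals, interp_shiftFO]; exact hσ i C hC
    · intro i B hi
      simp only [List.getElem?_map, Option.map_eq_some_iff] at hi
      obtain ⟨C, hC, rfl⟩ := hi
      rw [fals, interp_shiftFO]; exact hκ i C hC
  | fallE u _ ih =>
    intro e Φ σ κ hσ hκ π hπ
    rw [fals, interp_substFO0] at hπ
    exact ih e Φ σ κ hσ hκ π ⟨_, ⟨_, rfl⟩, hπ⟩
  | pallI _ ih =>
    intro e Φ σ κ hσ hκ π hπ
    rw [fals_pall] at hπ
    obtain ⟨_, ⟨F, rfl⟩, hk⟩ := hπ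
    refine ih e (scons F Φ) σ κ ?_ ?_ π hk
    · intro i B hi
      simp only [List.getElem?_map, Option.map_eq_some_iff] at hi
      obtain ⟨C, hC, rfl⟩ := hi
      have := interp_shift2 (M2 P) C F e Φ
      rw [fals, this]; exact hσ i C hC
    · intro i B hi
      simp only [List.getElem?_map, Option.map_eq_some_iff] at hi
      obtain ⟨C, hC, rfl⟩ := hi
      have := interp_shift2 (M2 P) C F e Φ
      rw [fals, this]; exact hκ i C hC
  | pallE G _ ih =>
    intro e Φ σ κ hσ hκ π hπ
    rw [fals, interp_inst0] at hπ
    exact ih e Φ σ κ hσ hκ π ⟨_, ⟨_, rfl⟩, hπ⟩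
  | eqE _ huv ih =>
    intro e Φ σ κ hσ hκ π hπ
    rw [fals, interp_substFO0, ← EqE_ev hE huv] at hπ
    refine ih e Φ σ κ hσ hκ π ?_
    rw [fals, interp_substFO0]; exact hπ
  | @muR Γ t A B Δ a _ ha ih =>
    intro e Φ σ κ hσ hκ π hπ
    simp only [inst]
    have hκ' : ∀ j C, (B :: Δ)[j]? = some C →
        (scons ((0 : ℕ), π) κ j).1 = 0 ∧ (scons (0, π) κ j).2 ∈ fals P e Φ C := by
      intro j C hj
      cases j with
      | zero => simp at hj; subst hj; exact ⟨rfl, hπ⟩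
      | succ j => exact hκ j C (by simpa using hj)
    have h0 := ih e Φ σ (scons (0, π) κ) hσ hκ' _ (hκ' a A ha).2
    have key : ∀ s : LM, inst LM.var (kpi π) (ren id (· + 1) s) = s := by
      intro s; rw [inst_ren]; exact inst_id s
    have hck : ∀ j, ck LM.var (kpi π) (kM κ) (j+1) = κ j := by
      intro j
      simp only [ck, kM, rk, kpi, List.map_map, List.append_nil]
      have : (inst LM.var (kpi π) ∘ ren id (· + 1)) = id := by
        funext s; exact key s
      rw [this]; simp
    have hck' : ck LM.var (kpi π) (kM κ) = scons (0, π) κ := by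
      funext j
      cases j with
      | zero => rfl
      | succ j => exact hck j
    refine hP _ _ (.mu _ _ π ?_) ?_
    · have := congrArg Prod.fst (congrFun hck' a)
      simp only [ck] at this
      rw [this]; exact (hκ' a A ha).1
    · rw [inst_appL, inst_inst, ← appL_append]
      have := congrArg Prod.snd (congrFun hck' a)
      simp only [ck] at this
      rw [this, hck']
      have hs : (fun i => inst LM.var (kpi π) (upM σ i)) = σ := by
        funext i; exact key _
      rw [hs]; exact h0

/-- The falsity values attached to two given terms. -/
def fx (P : Set LM) (a b : LM) : ℕ → Set LM
  | 0 => {d | .app a d ∈ P}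
  | i+1 => {d | ∀ t, (∀ d' ∈ fx P a b i, LM.app t d' ∈ P) → .app (.app b t) d ∈ P}

def fxL (P : Set LM) (a b : LM) : List ℕ → Set (List LM)
  | [k] => {π | ∃ d ∈ fx P a b k, π = [d]}
  | _ => ∅

theorem theta_spec {E : Set (FOTerm NatSig × FOTerm NatSig)} (hE : Adequate E)
    (P : Set LM) (hP : ∀ t t', Mach t t' → t' ∈ P → t ∈ P) {θ : LM} {n : ℕ} (hc : MC θ)
    (h : FD2 NatSig E [] θ (NForm (numT n)) []) (a b : LM) :
    ∀ d ∈ fx P a b n, LM.app (.app (.app θ a) b) d ∈ P := by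
  intro d hd
  have h1 := adequacy2 hE P hP h (fun _ => 0) (fun _ _ => ∅) LM.var (fun _ => (0, []))
    (by simp) (by simp)
  have h2 : inst LM.var (fun _ => (0, [])) θ = θ := by
    have := inst_var θ id (fun _ => 0)
    rw [hc] at this; exact this
  rw [h2] at h1
  refine h1 [a, b, d] ⟨_, ⟨fxL P a b, rfl⟩, ?_⟩
  refine ⟨a, [b, d], rfl, ?_, b, [d], rfl, ?_, ?_⟩
  · rintro π ⟨d, hd, rfl⟩
    exact hd
  · rintro π ⟨_, ⟨k, rfl⟩, v, π, rfl, hv, d, hd, rfl⟩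
    refine hd v ?_
    intro d' hd'
    exact hv [d'] ⟨d', hd', rfl⟩
  · refine ⟨d, ?_, rfl⟩
    rw [ev_numT]; exact hd

end LMX
namespace LMX
open LM

theorem upL_congr {t : LM} {σ σ' : ℕ → LM} (h : ∀ i, freeL i (.abs t) → σ i = σ' i) :
    ∀ i, freeL i t → upL σ i = upL σ' i := by
  intro i hi
  cases i with
  | zero => rfl
  | succ i => simp only [upL]; rw [h i hi]

theorem inst_congr (t : LM) : ∀ σ σ' κ, (∀ i, freeL i t → σ i = σ' i) → inst σ κ t = inst σ' κ t := by
  induction t with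
  | var i => intro σ σ' κ h; exact h i rfl
  | abs t ih => intro σ σ' κ h; simp only [inst]; rw [ih _ _ _ (upL_congr h)]
  | app t u ih1 ih2 =>
    intro σ σ' κ h
    simp only [inst]
    rw [ih1 _ _ _ (fun k hk => h k (.inl hk)), ih2 _ _ _ (fun k hk => h k (.inr hk))]
  | mu b t ih =>
    intro σ σ' κ h
    simp only [inst]
    rw [ih (upM σ) (upM σ')]
    intro i hi; simp only [upM]; rw [h i hi]

theorem freeL_ren (t : LM) : ∀ ρ δ k, freeL k (ren ρ δ t) → ∃ j, freeL j t ∧ ρ j = k := by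
  induction t with
  | var i => intro ρ δ k h; exact ⟨i, rfl, h⟩
  | abs t ih =>
    intro ρ δ k h
    obtain ⟨j, hj, e⟩ := ih _ _ _ h
    cases j with
    | zero => simp [liftρ] at e
    | succ j => exact ⟨j, hj, by simpa [liftρ] using e⟩
  | app t u ih1 ih2 =>
    intro ρ δ k h
    rcases h with h | h
    · obtain ⟨j, hj, e⟩ := ih1 _ _ _ h; exact ⟨j, .inl hj, e⟩
    · obtain ⟨j, hj, e⟩ := ih2 _ _ _ h; exact ⟨j, .inr hj, e⟩
  | mu b t ih => intro ρ δ k h; exact ih _ _ _ h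

theorem freeL_inst (t : LM) : ∀ σ k, freeL k (inst σ kid t) → ∃ i, freeL i t ∧ freeL k (σ i) := by
  induction t with
  | var i => intro σ k h; exact ⟨i, rfl, h⟩
  | abs t ih =>
    intro σ k h
    obtain ⟨j, hj, e⟩ := ih _ _ h
    cases j with
    | zero => simp [upL, freeL] at e
    | succ j =>
      obtain ⟨i, hi, e⟩ := freeL_ren _ _ _ _ e
      simp only [Nat.add_right_cancel_iff] at e
      subst e
      exact ⟨j, hj, hi⟩
  | app t u ih1 ih2 =>
    intro σ k h
    rcases h with h | h
    · obtain ⟨j, hj, e⟩ := ih1 _ _ h; exact ⟨j, .inl hj, e⟩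
    · obtain ⟨j, hj, e⟩ := ih2 _ _ h; exact ⟨j, .inr hj, e⟩
  | mu b t ih =>
    intro σ k h
    rw [inst, kM_kid] at h
    obtain ⟨j, hj, e⟩ := ih _ _ h
    obtain ⟨i, hi, e⟩ := freeL_ren _ _ _ _ e
    simp only [id] at e
    subst e
    exact ⟨j, hj, hi⟩

theorem freeL_subst0 {u v : LM} {k : ℕ} (h : freeL k (u.subst0 v)) :
    freeL (k+1) u ∨ freeL k v := by
  rw [subst0_eq] at h
  obtain ⟨i, hi, h⟩ := freeL_inst _ _ _ h
  cases i with
  | zero => exact .inr h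
  | succ i =>
    have : i = k := h
    subst this; exact .inl hi

theorem freeL_bdd (t : LM) : ∃ m, ∀ k, freeL k t → k < m := by
  induction t with
  | var i => exact ⟨i+1, fun k h => by have : i = k := h; omega⟩
  | abs t ih =>
    obtain ⟨m, hm⟩ := ih
    exact ⟨m, fun k h => by have := hm _ h; omega⟩
  | app t u ih1 ih2 =>
    obtain ⟨m, hm⟩ := ih1
    obtain ⟨m', hm'⟩ := ih2
    refine ⟨m + m', fun k h => ?_⟩
    rcases h with h | h
    · have := hm _ h; omega
    · have := hm' _ h; omega
  | mu b t ih => exact ih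

theorem MuFree_ren (t : LM) : ∀ ρ δ, MuFree t → MuFree (ren ρ δ t) := by
  induction t with
  | var i => intros; trivial
  | abs t ih => intro ρ δ h; exact ih _ _ h
  | app t u ih1 ih2 => intro ρ δ h; exact ⟨ih1 _ _ h.1, ih2 _ _ h.2⟩
  | mu b t ih => intro ρ δ h; exact h.elim

theorem MuFree_inst (t : LM) : ∀ σ κ, (∀ i, MuFree (σ i)) → MuFree t → MuFree (inst σ κ t) := by
  induction t with
  | var i => intro σ κ h _; exact h i
  | abs t ih =>
    intro σ κ h ht
    refine ih _ _ ?_ ht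
    intro i
    cases i with
    | zero => trivial
    | succ i => exact MuFree_ren _ _ _ (h i)
  | app t u ih1 ih2 => intro σ κ h ht; exact ⟨ih1 _ _ h ht.1, ih2 _ _ h ht.2⟩
  | mu b t ih => intro σ κ h ht; exact ht.elim

theorem MuFree_MC (t : LM) (h : MuFree t) : MC t := by
  apply MC_of_freeM
  induction t with
  | var i => intro k h; exact h
  | abs t ih => exact ih h
  | app t u ih1 ih2 =>
    rintro k (hk | hk)
    · exact ih1 h.1 k hk
    · exact ih2 h.2 k hk
  | mu b t ih => exact h.elim

theorem MuFree_subst0 {u v : LM} (hu : MuFree u) (hv : MuFree v) : MuFree (u.subst0 v) := by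
  rw [subst0_eq]
  refine MuFree_inst _ _ _ ?_ hu
  intro i
  cases i with
  | zero => exact hv
  | succ i => trivial

theorem WH_freeL {t t' : LM} (h : WH t t') : ∀ k, freeL k t' → freeL k t := by
  induction h with
  | beta u v => intro k h; exact freeL_subst0 h
  | appL v _ ih =>
    rintro k (h | h)
    · exact .inl (ih k h)
    · exact .inr h

theorem WH_MuFree {t t' : LM} (h : WH t t') : MuFree t → MuFree t' := by
  induction h with
  | beta u v => intro h; exact MuFree_subst0 h.1 h.2
  | appL v _ ih => intro h; exact ⟨ih h.1, h.2⟩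

theorem WH_inst {t t' : LM} (h : WH t t') (σ κ) : WH (inst σ κ t) (inst σ κ t') := by
  induction h with
  | beta u v => rw [inst_subst0]; exact .beta _ _
  | appL v _ ih => exact .appL _ ih

/-- Many-step β-reduction. -/
abbrev BRed : LM → LM → Prop := Relation.ReflTransGen LM.Beta

theorem BRed_appR (t : LM) {v v' : LM} (h : BRed v v') : BRed (.app t v) (.app t v') := by
  induction h with
  | refl => exact .refl
  | tail _ h ih => exact ih.tail (.appR t h)

theorem BRed_abs {v v' : LM} (h : BRed v v') : BRed (.abs v) (.abs v') := by
  induction h with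
  | refl => exact .refl
  | tail _ h ih => exact ih.tail (.abs h)

theorem BRed_eq {v v' : LM} (h : BRed v v') : LM.BetaEq v v' := by
  induction h with
  | refl => exact .refl _
  | tail _ h ih => exact .trans _ _ _ ih (.rel _ _ h)

theorem WH_Beta {t t' : LM} (h : WH t t') : LM.Beta t t' := by
  induction h with
  | beta u v => exact .c1 u v
  | appL v _ ih => exact .appL v ih

theorem Beta_ren {t t' : LM} (h : LM.Beta t t') : ∀ ρ δ, LM.Beta (ren ρ δ t) (ren ρ δ t') := by
  induction h with
  | c1 u v => intro ρ δ; rw [ren_subst0]; exact .c1 _ _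
  | appL v _ ih => intro ρ δ; exact .appL _ (ih _ _)
  | appR v _ ih => intro ρ δ; exact .appR _ (ih _ _)
  | abs _ ih => intro ρ δ; exact .abs (ih _ _)
  | mu b _ ih => intro ρ δ; exact .mu _ (ih _ _)

theorem BRed_ren {t t' : LM} (ρ δ) (h : BRed t t') : BRed (ren ρ δ t) (ren ρ δ t') := by
  induction h with
  | refl => exact .refl
  | tail _ h ih => exact ih.tail (Beta_ren h _ _)

theorem Beta_freeL {t t' : LM} (h : LM.Beta t t') : ∀ k, freeL k t' → freeL k t := by
  induction h with
  | c1 u v => intro k h; exact freeL_subst0 h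
  | appL v _ ih =>
    rintro k (h | h)
    · exact .inl (ih k h)
    · exact .inr h
  | appR v _ ih =>
    rintro k (h | h)
    · exact .inl h
    · exact .inr (ih k h)
  | abs _ ih => intro k h; exact ih _ h
  | mu b _ ih => intro k h; exact ih _ h

def rho (m : ℕ) : ℕ → ℕ := fun i => if i = m then 0 else i + 1

theorem ren_rho {u : LM} {m : ℕ} (h : ¬ freeL m (.abs u)) :
    ren (rho m) id (u.subst0 (.var m)) = u := by
  rw [subst0_eq, ren_inst]
  conv_rhs => rw [← inst_id u]
  rw [rk_kid]
  apply inst_congr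
  intro i hi
  cases i with
  | zero => simp [scons, ren, rho]
  | succ i =>
    have : i ≠ m := by rintro rfl; exact h hi
    simp [scons, ren, rho, this]

theorem BRed_app_var {m : ℕ} {y r : LM} (h : BRed y r) :
    (∀ s, r ≠ .app s (.var m)) → ∀ s, y = .app s (.var m) → ¬ freeL m s →
      BRed s (.abs (ren (rho m) id r)) := by
  intro hr
  induction h using Relation.ReflTransGen.head_induction_on with
  | refl => intro s hs; exact absurd hs (hr s)
  | head h1 h2 ih =>
    rintro s rfl hm
    cases h1 with
    | c1 u =>
      have := BRed_ren (rho m) id h2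
      rw [ren_rho hm] at this
      exact BRed_abs this
    | appL _ h => exact .head h (ih _ rfl (fun h' => hm (Beta_freeL h _ h')))
    | appR _ h => cases h

theorem ren_iterApp (ρ δ) (f x : LM) (n : ℕ) :
    ren ρ δ (LM.iterApp f n x) = LM.iterApp (ren ρ δ f) n (ren ρ δ x) := by
  induction n with
  | zero => rfl
  | succ n ih => simp only [LM.iterApp, ren, ih]

theorem church_of {t : LM} {m n : ℕ} (hm : ∀ k, freeL k t → k < m)
    (h : BRed (.app (.app t (.var m)) (.var (m+1))) (LM.iterApp (.var (m+1)) n (.var m))) :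
    BRed t (LM.church n) := by
  have h1 := BRed_app_var h (m := m+1) (by
    intro s hs
    cases n with
    | zero => cases hs
    | succ n =>
      simp only [LM.iterApp, LM.app.injEq] at hs
      cases n with
      | zero => simp [LM.iterApp] at hs
      | succ n => simp [LM.iterApp] at hs) _ rfl (by
    rintro (h | h)
    · have := hm _ h; omega
    · have : m = m + 1 := h
      omega)
  have h2 := BRed_app_var h1 (m := m) (by intro s hs; cases hs) _ rfl (by
    intro h; have := hm _ h; omega)
  convert h2 using 1
  simp [ren, ren_iterApp, rho, LM.church, liftρ]

end LMX
namespace LMX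
open LM

def code : LM → ℕ
  | .var i => 4 * i
  | .abs t => 4 * code t + 1
  | .app t u => 4 * Nat.pair (code t) (code u) + 2
  | .mu b t => 4 * Nat.pair b (code t) + 3

theorem code_inj : Function.Injective code := by
  intro t
  induction t with
  | var i =>
    intro u h
    cases u <;> simp only [code] at h <;> first | (exfalso; omega) | skip
    congr 1; omega
  | abs t ih =>
    intro u h
    cases u <;> simp only [code] at h <;> first | (exfalso; omega) | skip
    congr 1; exact ih (by omega)
  | app t u ih1 ih2 =>
    intro v h
    cases v <;> simp only [code] at h <;> first | (exfalso; omega) | skip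
    have h' := Nat.pair_eq_pair.1 (Nat.eq_of_mul_eq_mul_left (by omega : 0 < 4) (Nat.add_right_cancel h))
    rw [ih1 h'.1, ih2 h'.2]
  | mu b t ih =>
    intro v h
    cases v <;> simp only [code] at h <;> first | (exfalso; omega) | skip
    have h' := Nat.pair_eq_pair.1 (Nat.eq_of_mul_eq_mul_left (by omega : 0 < 4) (Nat.add_right_cancel h))
    obtain ⟨hb1, ht1⟩ := h'
    rw [hb1, ih ht1]

/-- Specification of the table of special variables. -/
structure IsInfo (info : ℕ → Option (ℕ × LM × LM)) : Prop where
  spec : ∀ m i a b, info m = some (i, a, b) → 2 ≤ m ∧ MuFree a ∧ MuFree b ∧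
    ∀ k, freeL k a ∨ freeL k b → k < m
  ex : ∀ i a b K, MuFree a → MuFree b → ∃ m, K ≤ m ∧ info m = some (i, a, b)

theorem exists_info : ∃ info, IsInfo info := by
  classical
  have : Countable LM := code_inj.countable
  have : Nonempty LM := ⟨.var 0⟩
  obtain ⟨e, he⟩ := exists_surjective_nat (ℕ × LM × LM)
  let cond : ℕ → ℕ × LM × LM → Prop := fun m p => 2 ≤ m ∧ MuFree p.2.1 ∧ MuFree p.2.2 ∧
    ∀ k, freeL k p.2.1 ∨ freeL k p.2.2 → k < m
  refine ⟨fun m => if cond m (e m.unpair.1) then some (e m.unpair.1) else none, ?_, ?_⟩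
  · intro m i a b h
    split at h
    · next hc =>
      have := Option.some.inj h
      rw [this] at hc
      exact hc
    · cases h
  · intro i a b K ha hb
    obtain ⟨j, hj⟩ := he (i, a, b)
    obtain ⟨ma, hma⟩ := freeL_bdd a
    obtain ⟨mb, hmb⟩ := freeL_bdd b
    have hle := Nat.right_le_pair j (K + 2 + ma + mb)
    refine ⟨Nat.pair j (K + 2 + ma + mb), by omega, ?_⟩
    have hc : cond (Nat.pair j (K + 2 + ma + mb)) (i, a, b) := by
      refine ⟨by omega, ha, hb, ?_⟩
      rintro k (hk | hk)
      · have := hma k hk; omega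
      · have := hmb k hk; omega
    simp only [Nat.unpair_pair, hj]
    exact if_pos hc

section
variable (info : ℕ → Option (ℕ × LM × LM)) (n : ℕ)

/-- Idealized execution. -/
inductive IStep : LM → LM → Prop
  | wh {t t' : LM} : WH t t' → IStep t t'
  | nu (a b c : LM) (m : ℕ) : info m = some (n, a, b) → (∀ k, freeL k c → k < m) →
      IStep (.app (.app (.app (.var 1) a) b) c) (.app (.var m) c)
  | zero (a b c : LM) (m : ℕ) : info m = some (0, a, b) →
      IStep (.app (.var m) c) (.app a c)
  | succ (i : ℕ) (a b c : LM) (m mnew : ℕ) : info m = some (i+1, a, b) → info mnew = some (i, a, b) →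
      m < mnew → (∀ k, freeL k c → k < mnew) →
      IStep (.app (.var m) c) (.app (.app b (.var mnew)) c)

/-- Sets of lambda terms closed under weak head expansion. -/
structure V1 : Type where
  S : Set LM
  mf : ∀ t ∈ S, MuFree t
  cl : ∀ t t', MuFree t → WH t t' → t' ∈ S → t ∈ S

def bot1 : V1 where
  S := {t | MuFree t ∧ ∃ τ, MuFree τ ∧ BRed τ (church n) ∧
    Relation.ReflTransGen (IStep info n) t (.app (.var 0) τ)}
  mf := fun t h => h.1
  cl := by
    rintro t t' ht h ⟨_, τ, h1, h2, h3⟩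
    exact ⟨ht, τ, h1, h2, h3.head (.wh h)⟩

def arr1 (A B : V1) : V1 where
  S := {t | MuFree t ∧ ∀ v ∈ A.S, .app t v ∈ B.S}
  mf := fun t h => h.1
  cl := by
    rintro t t' ht h ⟨_, h1⟩
    exact ⟨ht, fun v hv => B.cl _ _ ⟨ht, A.mf v hv⟩ (.appL v h) (h1 v hv)⟩

def inf1 (F : Set V1) : V1 where
  S := {t | MuFree t ∧ ∀ A ∈ F, t ∈ A.S}
  mf := fun t h => h.1
  cl := by
    rintro t t' ht h ⟨_, h1⟩
    exact ⟨ht, fun A hA => A.cl _ _ ht h (h1 A hA)⟩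

def M1 : TV V1 where
  bot := bot1 info n
  arr := arr1
  inf := inf1

theorem AF2LM_MuFree {E : Set (FOTerm NatSig × FOTerm NatSig)}
    {Γ : List (Form NatSig)} {t : LM} {A : Form NatSig} (h : AF2LM NatSig E Γ t A) : MuFree t := by
  induction h with
  | var h => trivial
  | absI _ ih => exact ih
  | appE _ _ ih1 ih2 => exact ⟨ih1, ih2⟩
  | fallI _ ih => exact ih
  | fallE u _ ih => exact ih
  | pallI _ ih => exact ih
  | pallE G _ ih => exact ih
  | eqE _ _ ih => exact ih

theorem AF2LM_freeL {E : Set (FOTerm NatSig × FOTerm NatSig)}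
    {Γ : List (Form NatSig)} {t : LM} {A : Form NatSig} (h : AF2LM NatSig E Γ t A) :
    ∀ k, freeL k t → k < Γ.length := by
  induction h with
  | var h =>
    intro k hk
    have hk : _ = k := hk
    subst hk
    exact (List.getElem?_eq_some_iff.1 h).1
  | absI _ ih => intro k hk; simpa using ih (k+1) hk
  | appE _ _ ih1 ih2 => rintro k (h | h); exacts [ih1 k h, ih2 k h]
  | fallI _ ih => simpa using ih
  | fallE u _ ih => exact ih
  | pallI _ ih => simpa using ih
  | pallE G _ ih => exact ih
  | eqE _ _ ih => exact ih

theorem adequacy1 {E : Set (FOTerm NatSig × FOTerm NatSig)} (hE : Adequate E)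
    {Γ : List (Form NatSig)} {t : LM} {A : Form NatSig}
    (h : AF2LM NatSig E Γ t A) :
    ∀ (e : ℕ → ℕ) (Φ : ℕ → List ℕ → V1) (σ : ℕ → LM), (∀ i, MuFree (σ i)) →
      (∀ i B, Γ[i]? = some B → σ i ∈ (interp (M1 info n) e Φ B).S) →
      inst σ kid t ∈ (interp (M1 info n) e Φ A).S := by
  induction h with
  | var h => intro e Φ σ hm hσ; exact hσ _ _ h
  | @absI Γ A B t hd ih =>
    intro e Φ σ hm hσ
    have hmf : MuFree (inst σ kid (.abs t)) := MuFree_inst _ _ _ hm (AF2LM_MuFree (AF2LM.absI hd))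
    refine ⟨hmf, ?_⟩
    intro v hv
    have hvm := V1.mf _ v hv
    refine V1.cl _ _ _ ⟨hmf, hvm⟩ (.beta _ _) ?_
    rw [subst0_inst]
    refine ih e Φ (scons v σ) ?_ ?_
    · intro i
      cases i with
      | zero => exact hvm
      | succ i => exact hm i
    · intro i C hi
      cases i with
      | zero => simp at hi; subst hi; exact hv
      | succ i => exact hσ i C (by simpa using hi)
  | appE _ _ ih1 ih2 =>
    intro e Φ σ hm hσ
    exact (ih1 e Φ σ hm hσ).2 _ (ih2 e Φ σ hm hσ)
  | fallI hd ih =>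
    intro e Φ σ hm hσ
    refine ⟨MuFree_inst _ _ _ hm (AF2LM_MuFree hd), ?_⟩
    rintro _ ⟨k, rfl⟩
    refine ih (scons k e) Φ σ hm ?_
    intro i B hi
    simp only [List.getElem?_map, Option.map_eq_some_iff] at hi
    obtain ⟨C, hC, rfl⟩ := hi
    rw [interp_shiftFO]; exact hσ i C hC
  | fallE u _ ih =>
    intro e Φ σ hm hσ
    rw [interp_substFO0]
    exact (ih e Φ σ hm hσ).2 _ ⟨_, rfl⟩
  | pallI hd ih =>
    intro e Φ σ hm hσ
    refine ⟨MuFree_inst _ _ _ hm (AF2LM_MuFree hd), ?_⟩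
    rintro _ ⟨F, rfl⟩
    refine ih e (scons F Φ) σ hm ?_
    intro i B hi
    simp only [List.getElem?_map, Option.map_eq_some_iff] at hi
    obtain ⟨C, hC, rfl⟩ := hi
    rw [interp_shift2]; exact hσ i C hC
  | pallE G _ ih =>
    intro e Φ σ hm hσ
    rw [interp_inst0]
    exact (ih e Φ σ hm hσ).2 _ ⟨_, rfl⟩
  | eqE _ huv ih =>
    intro e Φ σ hm hσ
    have := ih e Φ σ hm hσ
    rw [interp_substFO0] at this ⊢
    rw [← EqE_ev hE huv]; exact this

theorem nu_mem (hi : IsInfo info) (e : ℕ → ℕ) (Φ : ℕ → List ℕ → V1) (he : e 0 = n) :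
    LM.var 1 ∈ (interp (M1 info n) e Φ (NForm (FOTerm.var 0)).godel).S := by
  refine ⟨trivial, ?_⟩
  rintro _ ⟨F, rfl⟩
  refine ⟨trivial, ?_⟩
  intro a ha
  have ham := V1.mf _ a ha
  refine ⟨⟨trivial, ham⟩, ?_⟩
  intro b hb
  have hbm := V1.mf _ b hb
  refine ⟨⟨⟨trivial, ham⟩, hbm⟩, ?_⟩
  have key : ∀ i m, info m = some (i, a, b) → ∀ c ∈ (F [i]).S,
      LM.app (.var m) c ∈ (bot1 info n).S := by
    intro i
    induction i with
    | zero =>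
      intro m hm c hc
      obtain ⟨_, τ, h1, h2, h3⟩ := ha.2 c hc
      exact ⟨⟨trivial, V1.mf _ c hc⟩, τ, h1, h2, h3.head (.zero a b c m hm)⟩
    | succ i ih =>
      intro m hm c hc
      obtain ⟨mc, hmc⟩ := freeL_bdd c
      obtain ⟨m', hK, hm'⟩ := hi.ex i a b (m + 1 + mc) ham hbm
      have hb' := hb.2 _ ⟨i, rfl⟩
      have h1 := hb'.2 (.var m') ⟨trivial, ih m' hm'⟩
      obtain ⟨_, τ, h1, h2, h3⟩ := h1.2 c hc
      refine ⟨⟨trivial, V1.mf _ c hc⟩, τ, h1, h2, h3.head (.succ i a b c m m' hm hm' (by omega) ?_)⟩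
      intro k hk
      have := hmc k hk
      omega
  intro c hc
  have hc' : c ∈ (F [n]).S := by rw [← he]; exact hc
  obtain ⟨mc, hmc⟩ := freeL_bdd c
  obtain ⟨m, hK, hm⟩ := hi.ex n a b mc ham hbm
  obtain ⟨_, τ, h1, h2, h3⟩ := key n m hm c hc'
  refine ⟨⟨⟨⟨trivial, ham⟩, hbm⟩, V1.mf _ c hc⟩, τ, h1, h2, h3.head (.nu a b c m hm ?_)⟩
  intro k hk
  have := hmc k hk
  omega

/-- Terms reducing to an iterated application. -/
def itV (m k : ℕ) : V1 where
  S := {t | MuFree t ∧ BRed t (iterApp (.var (m+1)) k (.var m))}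
  mf := fun t h => h.1
  cl := by
    rintro t t' ht h ⟨_, h1⟩
    exact ⟨ht, h1.head (WH_Beta h)⟩

theorem f_mem (e : ℕ → ℕ) (Φ : ℕ → List ℕ → V1) (he : e 0 = n) :
    LM.var 0 ∈ (interp (M1 info n) e Φ (.neg (NForm (FOTerm.var 0)))).S := by
  refine ⟨trivial, ?_⟩
  intro τ hτ
  have hm := V1.mf _ τ hτ
  refine ⟨⟨trivial, hm⟩, τ, hm, ?_, .refl⟩
  obtain ⟨m, hmb⟩ := freeL_bdd τ
  apply church_of hmb
  have h1 := hτ.2 _ ⟨fun l => itV m (l.headD 0), rfl⟩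
  have h2 := h1.2 (.var m) ⟨trivial, .refl⟩
  have h3 := h2.2 (.var (m+1)) ⟨trivial, by
    rintro _ ⟨k, rfl⟩
    refine ⟨trivial, ?_⟩
    rintro v ⟨hv1, hv2⟩
    exact ⟨⟨trivial, hv1⟩, BRed_appR _ hv2⟩⟩
  have h4 := h3.2
  rw [← he]
  exact h4

theorem stage1 {E : Set (FOTerm NatSig × FOTerm NatSig)} (hE : Adequate E) (hi : IsInfo info)
    {T : LM} (hT : AF2LM NatSig E [] T storType) :
    ∃ τ, MuFree τ ∧ BRed τ (church n) ∧
      Relation.ReflTransGen (IStep info n) (.app (.app T (.var 1)) (.var 0)) (.app (.var 0) τ) := by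
  have h := adequacy1 info n hE hT (fun _ => 0) (fun _ _ => bot1 info n) LM.var (fun _ => trivial)
    (by simp)
  rw [inst_id] at h
  have h1 := h.2 _ ⟨n, rfl⟩
  have h2 := h1.2 (.var 1) (nu_mem info n hi _ _ rfl)
  have h3 := h2.2 (.var 0) (f_mem info n _ _ rfl)
  exact h3.2

structure Good (P : Set LM) (θ : LM) (D : Set ℕ) (σ : ℕ → LM) : Prop where
  zero : σ 0 = .var 0
  one : σ 1 = θ
  spec : ∀ m ∈ D, ∀ i a b, info m = some (i, a, b) → (∀ k, freeL k a ∨ freeL k b → k ∈ D) ∧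
    ∀ d ∈ fx P (inst σ kid a) (inst σ kid b) i, LM.app (σ m) d ∈ P

theorem inst_update {t : LM} {m : ℕ} (h : ∀ k, freeL k t → k < m) (σ : ℕ → LM) (v : LM) :
    inst (Function.update σ m v) kid t = inst σ kid t := by
  apply inst_congr
  intro i hi
  have := h i hi
  rw [Function.update_of_ne (by omega)]

theorem Good_update (hi : IsInfo info) {P : Set LM} {θ : LM} {D : Set ℕ} {σ : ℕ → LM}
    (hG : Good info P θ D σ) {m i : ℕ} {a b v : LM} (hm : info m = some (i, a, b))
    (hD : ∀ k, freeL k a ∨ freeL k b → k ∈ D)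
    (hv : ∀ d ∈ fx P (inst σ kid a) (inst σ kid b) i, LM.app v d ∈ P) :
    Good info P θ {k | k = m ∨ (k ∈ D ∧ k < m)} (Function.update σ m v) := by
  obtain ⟨h2, _, _, hlt⟩ := hi.spec m i a b hm
  refine ⟨?_, ?_, ?_⟩
  · rw [Function.update_of_ne (by omega)]; exact hG.zero
  · rw [Function.update_of_ne (by omega)]; exact hG.one
  · rintro m1 hm1 i1 a1 b1 hi1
    by_cases hmm : m1 = m
    · subst hmm
      rw [hm] at hi1
      cases hi1
      refine ⟨fun k hk => .inr ⟨hD k hk, hlt k hk⟩, ?_⟩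
      rw [inst_update (fun k hk => hlt k (.inl hk)), inst_update (fun k hk => hlt k (.inr hk)),
        Function.update_self]
      exact hv
    · obtain ⟨hm1D, hm1⟩ : m1 ∈ D ∧ m1 < m := hm1.resolve_left hmm
      obtain ⟨_, _, _, hlt1⟩ := hi.spec m1 i1 a1 b1 hi1
      obtain ⟨hs1, hs2⟩ := hG.spec m1 hm1D i1 a1 b1 hi1
      refine ⟨fun k hk => .inr ⟨hs1 k hk, (hlt1 k hk).trans hm1⟩, ?_⟩
      rw [inst_update (fun k hk => (hlt1 k (.inl hk)).trans hm1),
        inst_update (fun k hk => (hlt1 k (.inr hk)).trans hm1), Function.update_of_ne hmm]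
      exact hs2

theorem stage2 (hi : IsInfo info) {P : Set LM} (hP : ∀ t t', Mach t t' → t' ∈ P → t ∈ P)
    {θ τ : LM} (hθ : ∀ a b : LM, ∀ d ∈ fx P a b n, LM.app (.app (.app θ a) b) d ∈ P)
    (hτ : ∀ σ : ℕ → LM, σ 0 = .var 0 → LM.app (.var 0) (inst σ kid τ) ∈ P) {t : LM}
    (h : Relation.ReflTransGen (IStep info n) t (.app (.var 0) τ)) :
    ∀ D σ, (∀ k, freeL k t → k ∈ D) → Good info P θ D σ → inst σ kid t ∈ P := by
  induction h using Relation.ReflTransGen.head_induction_on with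
  | refl =>
    intro D σ _ hG
    simp only [inst, hG.zero]
    exact hτ σ hG.zero
  | head hs _ ih =>
    intro D σ hD hG
    cases hs with
    | wh hw =>
      exact hP _ _ (.wh (WH_inst hw σ kid)) (ih D σ (fun k hk => hD k (WH_freeL hw k hk)) hG)
    | nu a b c m hm hc =>
      have hDa : ∀ k, freeL k a ∨ freeL k b → k ∈ D := by
        rintro k (hk | hk)
        · exact hD k (.inl (.inl (.inr hk)))
        · exact hD k (.inl (.inr hk))
      have hG' := Good_update info hi hG hm hDa (hθ (inst σ kid a) (inst σ kid b))
      have := ih _ _ ?_ hG'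
      · simp only [inst, Function.update_self] at this
        rw [inst_update hc] at this
        simp only [inst, hG.one]
        exact this
      · rintro k (hk | hk)
        · exact .inl (Eq.symm hk)
        · exact .inr ⟨hD k (.inr hk), hc k hk⟩
    | zero a b c m hm =>
      obtain ⟨h1, h2⟩ := hG.spec m (hD m (.inl rfl)) 0 a b hm
      refine h2 _ ?_
      refine ih D σ ?_ hG
      rintro k (hk | hk)
      · exact h1 k (.inl hk)
      · exact hD k (.inr hk)
    | succ i a b c m m' hm hm' hlt hc =>
      obtain ⟨h1, h2⟩ := hG.spec m (hD m (.inl rfl)) (i+1) a b hm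
      obtain ⟨_, _, _, hlt'⟩ := hi.spec m' i a b hm'
      refine h2 _ ?_
      intro v hv
      have hG' := Good_update info hi hG hm' h1 hv
      have := ih _ _ ?_ hG'
      · simp only [inst, Function.update_self] at this
        rw [inst_update hc, inst_update (fun k hk => hlt' k (.inr hk))] at this
        exact this
      · rintro k ((hk | hk) | hk)
        · exact .inr ⟨h1 k (.inr hk), hlt' k (.inr hk)⟩
        · exact .inl (Eq.symm hk)
        · exact .inr ⟨hD k (.inr hk), hc k hk⟩

end

theorem storage (E : Set (FOTerm NatSig × FOTerm NatSig)) (hE : Adequate E)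
    (T : LM) (hT : AF2LM NatSig E [] T storType) :
    ∀ n : ℕ, ∃ τ : LM, MuFree τ ∧ BetaEq τ (church n) ∧
      ∀ θ : LM, ClosedLM θ → FD2 NatSig E [] θ (NForm (numT n)) [] →
        ∃ σ : ℕ → LM, σ 0 = .var 0 ∧
          SimMu (.app (.app T θ) (.var 0)) (.mu 0 (.app (.var 0) (τ.substL σ))) := by
  intro n
  obtain ⟨info, hi⟩ := exists_info
  obtain ⟨τ, hτm, hτb, hτ⟩ := stage1 info n hE hi hT
  refine ⟨τ, hτm, BRed_eq hτb, ?_⟩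
  intro θ hc hθ
  have hMC : MC θ := MC_of_freeM hc.2
  let P : Set LM := {Q | ∃ σ : ℕ → LM, σ 0 = .var 0 ∧
    Relation.ReflTransGen Mach Q (.app (.var 0) (inst σ kid τ))}
  have hP : ∀ t t', Mach t t' → t' ∈ P → t ∈ P := by
    rintro t t' h ⟨σ, h0, h1⟩
    exact ⟨σ, h0, h1.head h⟩
  have hTf : ∀ k, ¬ freeL k T := fun k hk => by simpa using AF2LM_freeL hT k hk
  have := stage2 info n hi hP (theta_spec hE P hP hMC hθ) (fun σ h0 => ⟨σ, h0, .refl⟩) hτ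
    {k | k < 2} (fun k => if k = 1 then θ else .var k) (by
      rintro k ((hk | hk) | hk)
      · exact absurd hk (hTf k)
      · have : 1 = k := hk
        subst this; simp
      · have : 0 = k := hk
        subst this; simp)
    ⟨by simp, by simp, by
      intro m hm i a b h
      have := (hi.spec m i a b h).1
      have hm : m < 2 := hm
      omega⟩
  have hTi : inst (fun k => if k = 1 then θ else .var k) kid T = T := by
    conv_rhs => rw [← inst_id T]
    exact inst_congr _ _ _ _ (fun k hk => absurd hk (hTf k))
  simp only [inst, hTi] at this
  obtain ⟨σ, h0, h1⟩ := this
  refine ⟨σ, h0, ?_⟩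
  rw [substL_eq]
  refine simMu_of ?_ h1
  rw [MC_app, MC_app]
  exact ⟨⟨MuFree_MC _ (AF2LM_MuFree hT), hMC⟩, fun _ => rfl⟩

end LMX
open LM in
/-- Parigot's storage theorem for the λμ-calculus : if
`⊢_AF2 T : ∀x{N^g[x] → ¬¬N[x]}`, then `T` is a storage operator for classical
integers : for every `n` there is a λ-term `τₙ ≃β n̲` such that for every
classical integer `θₙ` of value `n` (closed λμ-term with
`⊢_FD2 θₙ : N[sⁿ(0)]`) there is a substitution `σ` with
`(T)θₙf ∼μ μα[α](f)σ(τₙ)` (`f` a fresh variable). -/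
theorem stmt19 (E : Set (FOTerm NatSig × FOTerm NatSig)) (hE : Adequate E)
    (T : LM) (hT : AF2LM NatSig E [] T storType) :
    ∀ n : ℕ, ∃ τ : LM, MuFree τ ∧ BetaEq τ (church n) ∧
      ∀ θ : LM, ClosedLM θ → FD2 NatSig E [] θ (NForm (numT n)) [] →
        ∃ σ : ℕ → LM, σ 0 = var 0 ∧
          SimMu (app (app T θ) (var 0)) (mu 0 (app (var 0) (τ.substL σ))) := by
  exact LMX.storage E hE T hT
end
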